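/- arXiv:1012.3541 — 2 statements merged into one kernel-verified Lean document; each statement's English description precedes it below -/
import Mathlib

section
/- Let P be a simple closed n-gon in ℝ² with n ≥ 3. Then the polygonal diameter of ext P is at most ⌈n/2⌉: any two points of the unbounded component of ℝ² \ P can be joined inside it by a polygonal path with at most ⌈n/2⌉ segments. -/
open Set Metric

abbrev Plane := EuclideanSpace ℝ (Fin 2)

/-- The `i`-th edge of the closed polygon with vertex cycle `p`. -/
def polyEdge {n : ℕ} (p : ZMod n → Plane) (i : ZMod n) : Set Plane :=
  segment ℝ (p i) (p (i + 1))

/-- The union of the edges of the closed polygon with vertex cycle `p`. -/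
def polyBody {n : ℕ} (p : ZMod n → Plane) : Set Plane :=
  ⋃ i, polyEdge p i

/-- `p` is the vertex cycle of a simple closed `n`-gon: distinct vertices,
consecutive edges meet exactly in their common endpoint, non-consecutive edges
are disjoint. -/
structure IsSimplePolygon {n : ℕ} (p : ZMod n → Plane) : Prop where
  three_le : 3 ≤ n
  inj : Function.Injective p
  consec : ∀ i : ZMod n, polyEdge p i ∩ polyEdge p (i + 1) = {p (i + 1)}
  nonconsec : ∀ i j : ZMod n, j ≠ i → j ≠ i + 1 → i ≠ j + 1 →
    polyEdge p i ∩ polyEdge p j = ∅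

/-- The union of the bounded connected components of the complement of `P`
(the Jordan interior of `P`). -/
def intP (P : Set Plane) : Set Plane :=
  {x | x ∉ P ∧ Bornology.IsBounded (connectedComponentIn Pᶜ x)}

/-- The union of the unbounded connected components of the complement of `P`
(the Jordan exterior of `P`). -/
def extP (P : Set Plane) : Set Plane :=
  {x | x ∉ P ∧ ¬ Bornology.IsBounded (connectedComponentIn Pᶜ x)}

/-- There is a polygonal path of `k` segments from `a` to `b` inside `S`. -/
def PolyPath (S : Set Plane) (a b : Plane) (k : ℕ) : Prop :=
  ∃ x : Fin (k + 1) → Plane, x 0 = a ∧ x (Fin.last k) = b ∧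
    ∀ i : Fin k, segment ℝ (x i.castSucc) (x i.succ) ⊆ S

/-- The minimal number of segments of a polygonal path from `a` to `b` in `S`. -/
noncomputable def polyDist (S : Set Plane) (a b : Plane) : ℕ :=
  sInf {k | PolyPath S a b k}

namespace PolyAux
open Filter Topology

/-- the `i`-th edge in the complex plane -/
def CE {n : ℕ} (z : ZMod n → ℂ) (i : ZMod n) : Set ℂ := segment ℝ (z i) (z (i + 1))

/-- the union of the edges -/
def CB {n : ℕ} (z : ZMod n → ℂ) : Set ℂ := ⋃ i, CE z i

/-- simple polygon in the complex plane -/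
structure CP {n : ℕ} (z : ZMod n → ℂ) : Prop where
  three_le : 3 ≤ n
  inj : Function.Injective z
  consec : ∀ i : ZMod n, CE z i ∩ CE z (i + 1) = {z (i + 1)}
  nonconsec : ∀ i j : ZMod n, j ≠ i → j ≠ i + 1 → i ≠ j + 1 → CE z i ∩ CE z j = ∅

/-- `y` sees the vertex `z i` -/
def Sees {n : ℕ} (z : ZMod n → ℂ) (y : ℂ) (i : ZMod n) : Prop :=
  y ∉ CB z ∧ ∀ x ∈ segment ℝ y (z i), x ∈ CB z → x = z i

/-- the segment from `x` to `y` avoids the polygon -/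
def Free {n : ℕ} (z : ZMod n → ℂ) (x y : ℂ) : Prop := ∀ w ∈ segment ℝ x y, w ∉ CB z

theorem ce_sub {n : ℕ} (z : ZMod n → ℂ) (i : ZMod n) : CE z i ⊆ CB z := subset_iUnion _ i

theorem ce_left {n : ℕ} (z : ZMod n → ℂ) (i : ZMod n) : z i ∈ CE z i := left_mem_segment _ _ _
theorem ce_right {n : ℕ} (z : ZMod n → ℂ) (i : ZMod n) : z (i + 1) ∈ CE z i :=
  right_mem_segment _ _ _
theorem ce_right' {n : ℕ} (z : ZMod n → ℂ) (i : ZMod n) : z i ∈ CE z (i - 1) := by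
  have := ce_right z (i - 1); simpa using this
theorem vert_mem {n : ℕ} (z : ZMod n → ℂ) (i : ZMod n) : z i ∈ CB z := ce_sub z i (ce_left z i)

theorem ce_compact {n : ℕ} (z : ZMod n → ℂ) (i : ZMod n) : IsCompact (CE z i) := by
  unfold CE
  rw [segment_eq_image_lineMap]
  exact isCompact_Icc.image (by fun_prop)

theorem seg_compact (x y : ℂ) : IsCompact (segment ℝ x y) := by
  rw [segment_eq_image_lineMap]
  exact isCompact_Icc.image (by fun_prop)

theorem cb_compact {n : ℕ} [NeZero n] (z : ZMod n → ℂ) : IsCompact (CB z) :=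
  isCompact_iUnion (fun i => ce_compact z i)

theorem one_ne {n : ℕ} (h : 3 ≤ n) (i : ZMod n) : i + 1 ≠ i := by
  have : Fact (1 < n) := ⟨by omega⟩
  simp

theorem vert_edge {n : ℕ} {z : ZMod n → ℂ} (h : CP z) {i j : ZMod n} (hij : z i ∈ CE z j) :
    j = i ∨ j = i - 1 := by
  by_contra hc
  push Not at hc
  obtain ⟨h1, h2⟩ := hc
  by_cases h3 : j = i + 1
  · have := h.consec i
    have h4 : z i ∈ CE z i ∩ CE z (i + 1) := ⟨ce_left z i, h3 ▸ hij⟩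
    rw [this] at h4
    exact one_ne h.three_le i (h.inj h4).symm
  · have := h.nonconsec i j h1 h3 (by intro h4; apply h2; rw [h4]; ring)
    have h4 : z i ∈ CE z i ∩ CE z j := ⟨ce_left z i, hij⟩
    rw [this] at h4
    exact h4

theorem mem_seg_iff (x y w : ℂ) : w ∈ segment ℝ x y ↔ ∃ t : ℝ, 0 ≤ t ∧ t ≤ 1 ∧ w = x + t * (y - x) := by
  rw [segment_eq_image']
  constructor
  · rintro ⟨t, ⟨h0, h1⟩, rfl⟩
    exact ⟨t, h0, h1, by simp⟩
  · rintro ⟨t, h0, h1, rfl⟩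
    exact ⟨t, ⟨h0, h1⟩, by simp⟩

/-- rays of directions `d`, `e` from `v` : a common point of the rays gives a common
point of the segments -/
theorem ray_common {v d e : ℂ} {a b : ℝ} (ha : 0 < a) (hb : 0 < b) (hab : (a : ℂ) * d = b * e) :
    ∃ s t : ℝ, 0 < s ∧ s ≤ 1 ∧ 0 < t ∧ t ≤ 1 ∧ v + s * d = v + t * e := by
  refine ⟨a / (a + b), b / (a + b), by positivity, ?_, by positivity, ?_, ?_⟩
  · rw [div_le_one (by positivity)]; linarith
  · rw [div_le_one (by positivity)]; linarith
  · push_cast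
    rw [div_mul_eq_mul_div, div_mul_eq_mul_div, hab]

theorem dir_indep {n : ℕ} {z : ZMod n → ℂ} (h : CP z) (i : ZMod n) {a b : ℝ} (ha : 0 < a)
    (hb : 0 ≤ b) : (a : ℂ) * (z (i - 1) - z i) ≠ b * (z (i + 1) - z i) := by
  intro hab
  have hne : z (i - 1) - z i ≠ 0 := by
    intro h0
    have := h.inj (sub_eq_zero.1 h0)
    exact one_ne h.three_le (i - 1) (by rw [sub_add_cancel]; exact this.symm)
  rcases hb.eq_or_lt with rfl | hb
  · simp at hab
    rcases hab with h1 | h1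
    · exact ha.ne' h1
    · exact hne h1
  obtain ⟨s, t, hs, hs1, ht, ht1, hst⟩ := ray_common (v := z i) ha hb hab
  have h1 : z i + s * (z (i - 1) - z i) ∈ CE z (i - 1) := by
    unfold CE
    rw [segment_symm, mem_seg_iff]
    refine ⟨s, hs.le, hs1, by simp⟩
  have h2 : z i + s * (z (i - 1) - z i) ∈ CE z i := by
    rw [hst]
    unfold CE
    rw [mem_seg_iff]
    exact ⟨t, ht.le, ht1, rfl⟩
  have h3 := h.consec (i - 1)
  rw [sub_add_cancel] at h3
  have h4 : z i + s * (z (i - 1) - z i) ∈ ({z i} : Set ℂ) := h3 ▸ ⟨h1, h2⟩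
  simp at h4
  rcases h4 with h4 | h4
  · exact hs.ne' h4
  · exact hne h4

theorem sees_dir {n : ℕ} {z : ZMod n → ℂ} {y : ℂ} {i j k : ZMod n} (hs : Sees z y i)
    (hj : segment ℝ (z i) (z k) ⊆ CE z j) {a b : ℝ} (ha : 0 < a)
    (hb : 0 ≤ b) : (a : ℂ) * (y - z i) ≠ b * (z k - z i) := by
  intro hab
  have hne : y - z i ≠ 0 := by
    intro h0
    rw [sub_eq_zero] at h0
    exact hs.1 (h0 ▸ vert_mem z i)
  rcases hb.eq_or_lt with rfl | hb
  · simp at hab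
    rcases hab with h1 | h1
    · exact ha.ne' h1
    · exact hne h1
  obtain ⟨s, t, hs0, hs1, ht, ht1, hst⟩ := ray_common (v := z i) ha hb hab
  have h1 : z i + s * (y - z i) ∈ segment ℝ y (z i) := by
    rw [segment_symm, mem_seg_iff]
    exact ⟨s, hs0.le, hs1, rfl⟩
  have h2 : z i + s * (y - z i) ∈ CB z := by
    apply ce_sub z j
    apply hj
    rw [hst, mem_seg_iff]
    exact ⟨t, ht.le, ht1, rfl⟩
  have := hs.2 _ h1 h2
  simp at this
  rcases this with h4 | h4
  · exact hs0.ne' h4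
  · exact hne h4

/-- a segment disjoint from a closed set stays disjoint after a small move of an endpoint -/
theorem seg_small {y v : ℂ} (ζ : ℂ) {F : Set ℂ} (hF : IsClosed F)
    (h : Disjoint (segment ℝ y v) F) :
    ∀ᶠ ε : ℝ in 𝓝[>] (0 : ℝ), Disjoint (segment ℝ y (v + ε * ζ)) F := by
  obtain ⟨δ, hδ, hd⟩ := h.exists_thickenings (seg_compact y v) hF
  have h1 : ∀ᶠ ε : ℝ in 𝓝[>] (0 : ℝ), ε * ‖ζ‖ < δ := by
    have : Tendsto (fun ε : ℝ => ε * ‖ζ‖) (𝓝[>] 0) (𝓝 (0 * ‖ζ‖)) :=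
      tendsto_nhdsWithin_of_tendsto_nhds (Continuous.tendsto (by fun_prop) 0)
    rw [zero_mul] at this
    exact this.eventually_lt_const hδ
  filter_upwards [h1, self_mem_nhdsWithin] with ε h2 h3
  have h3 : 0 < ε := h3
  refine hd.mono ?_ (self_subset_thickening hδ F)
  intro x hx
  rw [mem_seg_iff] at hx
  obtain ⟨t, ht0, ht1, rfl⟩ := hx
  rw [mem_thickening_iff]
  refine ⟨y + t * (v - y), (mem_seg_iff _ _ _).2 ⟨t, ht0, ht1, rfl⟩, ?_⟩
  rw [dist_eq_norm]
  have : y + t * (v + ε * ζ - y) - (y + t * (v - y)) = t * (ε * ζ) := by ring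
  rw [this, norm_mul, norm_mul, Complex.norm_real, Complex.norm_real, Real.norm_of_nonneg ht0,
    Real.norm_of_nonneg h3.le]
  calc t * (ε * ‖ζ‖) ≤ 1 * (ε * ‖ζ‖) := by gcongr
    _ < δ := by linarith

/-- cone condition: the closed cone of `η`, `ζ` (without apex) misses the ray of `d` and zero -/
def Cone (η ζ d : ℂ) : Prop :=
  ∀ a b l : ℝ, 0 ≤ a → 0 ≤ b → 0 ≤ l → (a : ℂ) * η + b * ζ = l * d → a = 0 ∧ b = 0

theorem cone_free {n : ℕ} [NeZero n] {z : ZMod n → ℂ} (h : CP z) {y : ℂ} {i : ZMod n}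
    (hs : Sees z y i) {ζ : ℂ}
    (h1 : Cone (y - z i) ζ (z (i + 1) - z i)) (h2 : Cone (y - z i) ζ (z (i - 1) - z i)) :
    ∀ᶠ ε : ℝ in 𝓝[>] (0 : ℝ), Free z y (z i + ε * ζ) := by
  have key : ∀ j : ZMod n, ∀ᶠ ε : ℝ in 𝓝[>] (0 : ℝ), Disjoint (segment ℝ y (z i + ε * ζ)) (CE z j) := by
    intro j
    have cone_case : ∀ g : ℂ, Cone (y - z i) ζ (g - z i) → ∀ᶠ ε : ℝ in 𝓝[>] (0 : ℝ),
        Disjoint (segment ℝ y (z i + ε * ζ)) (segment ℝ (z i) g) := by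
      intro g hg
      filter_upwards [self_mem_nhdsWithin] with ε h3
      have h3 : 0 < ε := h3
      rw [Set.disjoint_left]
      intro x hx hx'
      rw [mem_seg_iff] at hx hx'
      obtain ⟨t, ht0, ht1, rfl⟩ := hx
      obtain ⟨s, hs0, hs1, hh⟩ := hx'
      have := hg (1 - t) (t * ε) s (by linarith) (by positivity) hs0 (by
        push_cast
        linear_combination hh)
      have ht : t = 1 := by linarith [this.1]
      have := this.2
      rw [ht] at this
      linarith
    by_cases hj1 : j = i
    · subst hj1; exact cone_case _ h1
    by_cases hj2 : j = i - 1
    · subst hj2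
      have := cone_case _ h2
      unfold CE
      rw [sub_add_cancel, segment_symm ℝ (z (i-1))]
      exact this
    apply seg_small _ (ce_compact z j).isClosed
    rw [Set.disjoint_left]
    intro x hx hx'
    have := hs.2 x hx (ce_sub z j hx')
    subst this
    rcases vert_edge h hx' with h3 | h3
    · exact hj1 h3
    · exact hj2 h3
  have := (eventually_all.2 key)
  filter_upwards [this] with ε h3 w hw hw'
  obtain ⟨j, hj⟩ := mem_iUnion.1 hw'
  exact Set.disjoint_left.1 (h3 j) hw hj

end PolyAux

namespace PolyAux
open Filter Topology

/-- unit vector of angle `t` -/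
noncomputable def ev (t : ℝ) : ℂ := Real.cos t + Real.sin t * Complex.I

theorem ev_re (t : ℝ) : (ev t).re = Real.cos t := by simp [ev, -Complex.ofReal_cos, -Complex.ofReal_sin]
theorem ev_im (t : ℝ) : (ev t).im = Real.sin t := by simp [ev, -Complex.ofReal_cos, -Complex.ofReal_sin]

theorem ev_ne (t : ℝ) : ev t ≠ 0 := by
  intro h
  have h1 := ev_re t
  have h2 := ev_im t
  rw [h] at h1 h2
  simp at h1 h2
  have := Real.sin_sq_add_cos_sq t
  rw [← h1, ← h2] at this
  norm_num at this

/-- the main angle lemma, half of it -/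
theorem ang1 {α γ τ a b l : ℝ} (h1 : α ≤ γ) (h2 : γ - α < Real.pi) (h3 : γ < τ)
    (h4 : τ - α < 2 * Real.pi) (ha : 0 ≤ a) (hb : 0 ≤ b) (hl : 0 ≤ l)
    (h : (a : ℂ) * ev α + b * ev γ = l * ev τ) : a = 0 ∧ b = 0 := by
  have hre := congrArg Complex.re h
  have him := congrArg Complex.im h
  simp [ev_re, ev_im] at hre him
  have e1 : b * Real.sin (γ - α) = l * Real.sin (τ - α) := by
    rw [Real.sin_sub, Real.sin_sub]
    linear_combination him * Real.cos α - hre * Real.sin α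
  have e2 : a * Real.sin (γ - α) = - (l * Real.sin (τ - γ)) := by
    rw [Real.sin_sub, Real.sin_sub]
    linear_combination -him * Real.cos γ + hre * Real.sin γ
  have e3 : a * Real.cos (τ - α) + b * Real.cos (τ - γ) = l := by
    have := Real.sin_sq_add_cos_sq τ
    rw [Real.cos_sub, Real.cos_sub]
    linear_combination him * Real.sin τ + hre * Real.cos τ + l * this
  have s0 : 0 ≤ Real.sin (γ - α) := Real.sin_nonneg_of_nonneg_of_le_pi (by linarith) (by linarith)
  by_cases hl0 : l = 0
  · subst hl0
    rcases h1.eq_or_lt with rfl | h1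
    · have := Real.sin_sq_add_cos_sq α
      have : a + b = 0 := by
        linear_combination hre * Real.cos α + him * Real.sin α - (a + b) * this
      constructor <;> linarith
    · have s1 : 0 < Real.sin (γ - α) := Real.sin_pos_of_pos_of_lt_pi (by linarith) (by linarith)
      simp at e1 e2
      constructor
      · rcases e2 with h | h
        · exact h
        · linarith
      · rcases e1 with h | h
        · exact h
        · linarith
  have hl1 : 0 < l := lt_of_le_of_ne hl (Ne.symm hl0)
  have s1 : 0 ≤ Real.sin (τ - α) := by
    by_contra hc
    push Not at hc
    have := mul_nonneg hb s0
    nlinarith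
  have s2 : Real.sin (τ - γ) ≤ 0 := by
    by_contra hc
    push Not at hc
    have := mul_nonneg ha s0
    nlinarith
  have t1 : τ - α ≤ Real.pi := by
    by_contra hc
    push Not at hc
    have := Real.sin_neg_of_neg_of_neg_pi_lt (x := τ - α - 2 * Real.pi) (by linarith) (by linarith)
    rw [Real.sin_sub_two_pi] at this
    linarith
  have t2 : Real.pi ≤ τ - γ := by
    by_contra hc
    push Not at hc
    have := Real.sin_pos_of_pos_of_lt_pi (x := τ - γ) (by linarith) (by linarith)
    linarith
  have t3 : α = γ := by linarith
  have t4 : τ - γ = Real.pi := by linarith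
  subst t3
  rw [t4, Real.cos_pi] at e3
  constructor <;> linarith

theorem ev_neg_angle (t : ℝ) : ev (-t) = (starRingEnd ℂ) (ev t) := by
  apply Complex.ext <;> simp [ev_re, ev_im]

theorem ang2 {α γ τ a b l : ℝ} (h1 : α ≤ γ) (h2 : γ - α < Real.pi) (h3 : τ < α)
    (h4 : γ - τ < 2 * Real.pi) (ha : 0 ≤ a) (hb : 0 ≤ b) (hl : 0 ≤ l)
    (h : (a : ℂ) * ev α + b * ev γ = l * ev τ) : a = 0 ∧ b = 0 := by
  have := ang1 (α := -γ) (γ := -α) (τ := -τ) (a := b) (b := a) (l := l) (by linarith) (by linarith)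
    (by linarith) (by linarith) hb ha hl (by
      rw [ev_neg_angle, ev_neg_angle, ev_neg_angle]
      have := congrArg (starRingEnd ℂ) h
      simp only [map_add, map_mul, Complex.conj_ofReal] at this
      rw [← this]; ring)
  exact this.symm

/-- the full angle lemma -/
theorem ang {α γ τ : ℝ} (h2 : |γ - α| < Real.pi)
    (h3 : (τ < α ∧ τ < γ ∧ γ - τ < 2 * Real.pi ∧ α - τ < 2 * Real.pi) ∨
      (α < τ ∧ γ < τ ∧ τ - γ < 2 * Real.pi ∧ τ - α < 2 * Real.pi)) :
    Cone (ev α) (ev γ) (ev τ) := by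
  intro a b l ha hb hl h
  rw [abs_lt] at h2
  rcases le_total α γ with hc | hc
  · rcases h3 with h3 | h3
    · exact ang2 hc h2.2 h3.1 h3.2.2.1 ha hb hl h
    · exact ang1 hc h2.2 h3.2.1 h3.2.2.2 ha hb hl h
  · rw [add_comm] at h
    rcases h3 with h3 | h3
    · exact (ang2 hc (by linarith) h3.2.1 h3.2.2.2 hb ha hl h).symm
    · exact (ang1 hc (by linarith) h3.1 h3.2.2.1 hb ha hl h).symm

/-- rescaling of the cone condition -/
theorem cone_scale {η ζ d c : ℂ} {r s : ℝ} (hr : 0 < r) (hs : 0 < s) (hc : c ≠ 0)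
    (h : Cone η ζ d) : Cone (c * (r * η)) (c * ζ) (c * (s * d)) := by
  intro a b l ha hb hl hh
  have : ((a * r : ℝ) : ℂ) * η + b * ζ = ((l * s : ℝ) : ℂ) * d := by
    apply mul_left_cancel₀ hc
    push_cast
    linear_combination hh
  obtain ⟨h1, h2⟩ := h (a * r) b (l * s) (by positivity) hb (by positivity) this
  refine ⟨?_, h2⟩
  rcases mul_eq_zero.1 h1 with h | h
  · exact h
  · linarith

/-- polar form with angle in `(0, 2π)` -/
theorem polar {w : ℂ} (h : -w ∈ Complex.slitPlane) :
    ∃ r α : ℝ, 0 < r ∧ 0 < α ∧ α < 2 * Real.pi ∧ w = r * ev α ∧ Complex.arg (-w) = α - Real.pi := by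
  have h0 : -w ≠ 0 := Complex.slitPlane_ne_zero h
  refine ⟨‖-w‖, Complex.arg (-w) + Real.pi, norm_pos_iff.2 h0, ?_, ?_, ?_, by ring⟩
  · linarith [Complex.neg_pi_lt_arg (-w)]
  · have := Complex.mem_slitPlane_iff_arg.1 h
    have h2 := Complex.arg_le_pi (-w)
    have := lt_of_le_of_ne h2 this.1
    linarith
  · have := Complex.norm_mul_cos_add_sin_mul_I (-w)
    have h3 : ev (Complex.arg (-w) + Real.pi) = -(Complex.cos (Complex.arg (-w)) + Complex.sin (Complex.arg (-w)) * Complex.I) := by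
      simp [ev, Complex.cos_add_pi, Complex.sin_add_pi]; ring
    rw [h3, mul_neg, this, neg_neg]

theorem slit_of {w : ℂ} (h : ∀ a b : ℝ, 0 < a → 0 ≤ b → (a : ℂ) * w ≠ b) : -w ∈ Complex.slitPlane := by
  rw [Complex.mem_slitPlane_iff]
  by_contra hc
  push Not at hc
  obtain ⟨h1, h2⟩ := hc
  simp at h1 h2
  refine h 1 w.re one_pos h1 ?_
  apply Complex.ext <;> simp [h2]

theorem arg_ev {r t : ℝ} (hr : 0 < r) (h1 : -Real.pi < t) (h2 : t ≤ Real.pi) :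
    Complex.arg (r * ev t) = t := by
  have := Complex.arg_mul_cos_add_sin_mul_I hr (θ := t) ⟨h1, h2⟩
  simpa [ev] using this

theorem ev_add (s t : ℝ) : ev (s + t) = ev s * ev t := by
  apply Complex.ext
  · simp [ev_re, ev_im, Real.cos_add]
  · simp [ev_re, ev_im, Real.sin_add]; ring

theorem ev_neg_mul (t : ℝ) : ev (-t) * ev t = 1 := by
  rw [← ev_add]; apply Complex.ext <;> simp [ev_re, ev_im]

end PolyAux

namespace PolyAux
open Filter Topology

theorem vert_ne {n : ℕ} {z : ZMod n → ℂ} (h : CP z) (i : ZMod n) : z (i + 1) - z i ≠ 0 := by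
  intro h0
  exact one_ne h.three_le i (h.inj (sub_eq_zero.1 h0))

theorem vert_ne' {n : ℕ} {z : ZMod n → ℂ} (h : CP z) (i : ZMod n) : z (i - 1) - z i ≠ 0 := by
  have := vert_ne h (i - 1)
  rw [sub_add_cancel] at this
  intro h0
  apply this
  linear_combination -h0

theorem prev_polar {n : ℕ} {z : ZMod n → ℂ} (h : CP z) (i : ZMod n) :
    ∃ ρ θ : ℝ, 0 < ρ ∧ 0 < θ ∧ θ < 2 * Real.pi ∧
      z (i - 1) - z i = (z (i + 1) - z i) * (ρ * ev θ) := by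
  have hd := vert_ne h i
  have : -((z (i - 1) - z i) / (z (i + 1) - z i)) ∈ Complex.slitPlane := by
    apply slit_of
    intro a b ha hb hab
    apply dir_indep h i ha hb
    field_simp at hab
    linear_combination hab
  obtain ⟨ρ, θ, h1, h2, h3, h4, h5⟩ := polar this
  refine ⟨ρ, θ, h1, h2, h3, ?_⟩
  rw [← h4]; field_simp

theorem sees_polar {n : ℕ} {z : ZMod n → ℂ} (h : CP z) {y : ℂ} {i : ZMod n} (hs : Sees z y i) :
    ∃ r α : ℝ, 0 < r ∧ 0 < α ∧ α < 2 * Real.pi ∧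
      y - z i = (z (i + 1) - z i) * (r * ev α) := by
  have hd := vert_ne h i
  have : -((y - z i) / (z (i + 1) - z i)) ∈ Complex.slitPlane := by
    apply slit_of
    intro a b ha hb hab
    apply sees_dir hs (k := i + 1) (j := i) subset_rfl ha hb
    field_simp at hab
    linear_combination hab
  obtain ⟨ρ, θ, h1, h2, h3, h4, h5⟩ := polar this
  refine ⟨ρ, θ, h1, h2, h3, ?_⟩
  rw [← h4]; field_simp

theorem sees_ne {n : ℕ} {z : ZMod n → ℂ} {y : ℂ} {i : ZMod n} (hs : Sees z y i)
    {ρ θ r α : ℝ} (hρ : 0 < ρ) (hr : 0 < r)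
    (h1 : z (i - 1) - z i = (z (i + 1) - z i) * (ρ * ev θ))
    (h2 : y - z i = (z (i + 1) - z i) * (r * ev α)) : α ≠ θ := by
  rintro rfl
  apply sees_dir hs (k := i - 1) (j := i - 1) (a := ρ) (b := r) _ hρ hr.le
  · rw [h1, h2]; ring
  · unfold CE
    rw [sub_add_cancel, segment_symm]

theorem ev_zero : ev 0 = 1 := by simp [ev]
theorem ev_two_pi : ev (2 * Real.pi) = 1 := by simp [ev]

theorem next_aux {n : ℕ} [NeZero n] {z : ZMod n → ℂ} (h : CP z) {y : ℂ} {i : ZMod n}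
    (hs : Sees z y i) {ρ θ r α γ : ℝ} (hρ : 0 < ρ) (hr : 0 < r)
    (h1 : z (i - 1) - z i = (z (i + 1) - z i) * (ρ * ev θ))
    (h2 : y - z i = (z (i + 1) - z i) * (r * ev α))
    (c1 : Cone (ev α) (ev γ) 1) (c2 : Cone (ev α) (ev γ) (ev θ)) (c3 : Cone 1 (ev γ) (ev θ))
    (hγ : Real.sin γ ≠ 0) : ∃ q, Free z y q ∧ Sees z q (i + 1) := by
  set d := z (i + 1) - z i with hd
  have hd0 : d ≠ 0 := vert_ne h i
  set ζ := d * ev γ with hζ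
  have f1 : ∀ᶠ ε : ℝ in 𝓝[>] (0 : ℝ), Free z y (z i + ε * ζ) := by
    apply cone_free h hs
    · rw [h2, ← hd]
      have := cone_scale hr one_pos hd0 c1
      simpa using this
    · rw [h1, h2]
      exact cone_scale hr hρ hd0 c2
  -- next edge
  set d' := z (i + 1 + 1) - z (i + 1) with hd'
  have hd0' : d' ≠ 0 := vert_ne h (i + 1)
  have hw : d / d' ∈ Complex.slitPlane := by
    have : -(-(d / d')) ∈ Complex.slitPlane := by
      apply slit_of
      intro a b ha hb hab
      have := dir_indep h (i + 1) ha hb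
      rw [add_sub_cancel_right] at this
      apply this
      field_simp at hab
      rw [hd, hd'] at hab
      linear_combination hab
    simpa using this
  have f2 : ∀ᶠ ε : ℝ in 𝓝[>] (0 : ℝ), (d - ε * ζ) / d' ∈ Complex.slitPlane := by
    have : Tendsto (fun ε : ℝ => (d - ε * ζ) / d') (𝓝[>] 0) (𝓝 ((d - (0 : ℝ) * ζ) / d')) :=
      tendsto_nhdsWithin_of_tendsto_nhds (Continuous.tendsto (by fun_prop) 0)
    apply this.eventually
    apply Complex.isOpen_slitPlane.mem_nhds
    simpa using hw
  have f3 : ∀ j : ZMod n, ∀ᶠ ε : ℝ in 𝓝[>] (0 : ℝ), j ≠ i → j ≠ i + 1 → j ≠ i - 1 →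
      Disjoint (segment ℝ (z (i + 1)) (z i + ε * ζ)) (CE z j) := by
    intro j
    by_cases hj : j ≠ i ∧ j ≠ i + 1 ∧ j ≠ i - 1
    · have := seg_small (y := z (i + 1)) (v := z i) ζ (ce_compact z j).isClosed (by
        rw [Set.disjoint_iff_inter_eq_empty, segment_symm]
        exact h.nonconsec i j hj.1 hj.2.1 (by intro h5; apply hj.2.2; rw [h5]; ring))
      filter_upwards [this] with ε h5 _ _ _
      exact h5
    · filter_upwards with ε h5 h6 h7
      exact absurd ⟨h5, h6, h7⟩ hj
  have f0 : ∀ᶠ ε : ℝ in 𝓝[>] (0 : ℝ), 0 < ε := eventually_mem_nhdsWithin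
  obtain ⟨ε, hε, g1, g2, g3⟩ := (f0.and (f1.and (f2.and (eventually_all.2 f3)))).exists
  refine ⟨z i + ε * ζ, g1, g1 _ (right_mem_segment _ _ _), ?_⟩
  intro x hx hxB
  obtain ⟨j, hj⟩ := mem_iUnion.1 hxB
  have hx' := hx
  rw [mem_seg_iff] at hx'
  obtain ⟨t, ht0, ht1, rfl⟩ := hx'
  by_cases j1 : j = i
  · subst j1
    unfold CE at hj
    rw [mem_seg_iff] at hj
    obtain ⟨s, hs0, hs1, hh⟩ := hj
    have e : ((1 - t) * ε : ℝ) * ev γ = ((s - t : ℝ) : ℂ) := by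
      apply mul_left_cancel₀ hd0
      push_cast
      rw [hζ] at hh
      rw [hd] at hh ⊢
      linear_combination hh
    have e2 := congrArg Complex.im e
    simp [ev_im, hγ, hε.ne'] at e2
    have : t = 1 := by linarith
    rw [this]; push_cast; ring
  by_cases j2 : j = i - 1
  · exfalso
    subst j2
    unfold CE at hj
    rw [sub_add_cancel, segment_symm, mem_seg_iff] at hj
    obtain ⟨s, hs0, hs1, hh⟩ := hj
    have e : ((t : ℝ) : ℂ) * 1 + ((1 - t) * ε : ℝ) * ev γ = ((s * ρ : ℝ) : ℂ) * ev θ := by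
      apply mul_left_cancel₀ hd0
      push_cast
      rw [h1, hζ] at hh
      rw [hd] at hh ⊢
      linear_combination hh
    have := c3 _ _ _ ht0 (mul_nonneg (by linarith) hε.le) (by positivity) e
    rw [this.1] at this
    have := this.2
    linarith
  by_cases j3 : j = i + 1
  · subst j3
    unfold CE at hj
    rw [mem_seg_iff] at hj
    obtain ⟨s, hs0, hs1, hh⟩ := hj
    by_contra hne
    have ht : t < 1 := by
      apply lt_of_le_of_ne ht1
      rintro rfl
      apply hne; push_cast; ring
    have e : (d - ε * ζ) / d' = ((-(s / (1 - t)) : ℝ) : ℂ) := by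
      have : (1 - t : ℂ) ≠ 0 := by
        have : (1 - t : ℝ) ≠ 0 := by linarith
        exact_mod_cast this
      push_cast
      field_simp
      rw [hd, hd']
      linear_combination -hh
    rw [e, Complex.ofReal_mem_slitPlane] at g2
    have : 0 ≤ s / (1 - t) := div_nonneg hs0 (by linarith)
    linarith
  · exfalso
    rw [segment_symm] at hx
    exact Set.disjoint_left.1 (g3 j j1 j3 j2) hx hj

theorem see_next {n : ℕ} [NeZero n] {z : ZMod n → ℂ} (h : CP z) {y : ℂ} {i : ZMod n}
    (hs : Sees z y i) : ∃ q, Free z y q ∧ Sees z q (i + 1) := by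
  obtain ⟨ρ, θ, hρ, hθ0, hθ1, h1⟩ := prev_polar h i
  obtain ⟨r, α, hr, hα0, hα1, h2⟩ := sees_polar h hs
  have hne := sees_ne hs hρ hr h1 h2
  have hpi := Real.pi_pos
  rcases lt_or_gt_of_ne hne with hlt | hlt
  · refine next_aux h hs (γ := α / 2) hρ hr h1 h2 ?_ ?_ ?_ ?_
    · rw [← ev_zero]
      apply ang
      · rw [abs_lt]; constructor <;> linarith
      · left; refine ⟨?_, ?_, ?_, ?_⟩ <;> linarith
    · apply ang
      · rw [abs_lt]; constructor <;> linarith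
      · right; refine ⟨?_, ?_, ?_, ?_⟩ <;> linarith
    · rw [← ev_zero]
      apply ang
      · rw [abs_lt]; constructor <;> linarith
      · right; refine ⟨?_, ?_, ?_, ?_⟩ <;> linarith
    · exact (Real.sin_pos_of_pos_of_lt_pi (by linarith) (by linarith)).ne'
  · refine next_aux h hs (γ := α / 2 + Real.pi) hρ hr h1 h2 ?_ ?_ ?_ ?_
    · rw [← ev_two_pi]
      apply ang
      · rw [abs_lt]; constructor <;> linarith
      · right; refine ⟨?_, ?_, ?_, ?_⟩ <;> linarith
    · apply ang
      · rw [abs_lt]; constructor <;> linarith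
      · left; refine ⟨?_, ?_, ?_, ?_⟩ <;> linarith
    · rw [← ev_two_pi]
      apply ang
      · rw [abs_lt]; constructor <;> linarith
      · left; refine ⟨?_, ?_, ?_, ?_⟩ <;> linarith
    · rw [Real.sin_add_pi]
      exact (neg_neg_of_pos (Real.sin_pos_of_pos_of_lt_pi (by linarith) (by linarith))).ne

/-- two points that see a vertex from the same side have a common neighbour -/
theorem meet_aux {n : ℕ} [NeZero n] {z : ZMod n → ℂ} (h : CP z) {y y' : ℂ} {i : ZMod n}
    (hs : Sees z y i) (hs' : Sees z y' i) {ρ θ r α r' α' : ℝ} (hρ : 0 < ρ) (hr : 0 < r)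
    (hr' : 0 < r') (hθ0 : 0 < θ) (hθ1 : θ < 2 * Real.pi)
    (hα0 : 0 < α) (hα1 : α < 2 * Real.pi) (hα0' : 0 < α') (hα1' : α' < 2 * Real.pi)
    (h1 : z (i - 1) - z i = (z (i + 1) - z i) * (ρ * ev θ))
    (h2 : y - z i = (z (i + 1) - z i) * (r * ev α))
    (h2' : y' - z i = (z (i + 1) - z i) * (r' * ev α'))
    (hside : (α < θ ∧ α' < θ) ∨ (θ < α ∧ θ < α')) : ∃ q, Free z y q ∧ Free z y' q := by
  have hd0 := vert_ne h i
  set d := z (i + 1) - z i with hd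
  have hpi := Real.pi_pos
  set γ := (α + α') / 2 with hγ
  have c1 : Cone (ev α) (ev γ) 1 := by
    rw [← ev_zero]
    apply ang
    · rw [abs_lt]; constructor <;> linarith
    · left; refine ⟨?_, ?_, ?_, ?_⟩ <;> linarith
  have c1' : Cone (ev α') (ev γ) 1 := by
    rw [← ev_zero]
    apply ang
    · rw [abs_lt]; constructor <;> linarith
    · left; refine ⟨?_, ?_, ?_, ?_⟩ <;> linarith
  have c2 : Cone (ev α) (ev γ) (ev θ) := by
    apply ang
    · rw [abs_lt]; constructor <;> linarith
    · rcases hside with hh | hh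
      · right; refine ⟨?_, ?_, ?_, ?_⟩ <;> linarith
      · left; refine ⟨?_, ?_, ?_, ?_⟩ <;> linarith
  have c2' : Cone (ev α') (ev γ) (ev θ) := by
    apply ang
    · rw [abs_lt]; constructor <;> linarith
    · rcases hside with hh | hh
      · right; refine ⟨?_, ?_, ?_, ?_⟩ <;> linarith
      · left; refine ⟨?_, ?_, ?_, ?_⟩ <;> linarith
  have f1 : ∀ᶠ ε : ℝ in 𝓝[>] (0 : ℝ), Free z y (z i + ε * (d * ev γ)) := by
    apply cone_free h hs
    · rw [h2, ← hd]
      have := cone_scale hr one_pos hd0 c1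
      simpa using this
    · rw [h1, h2]
      exact cone_scale hr hρ hd0 c2
  have f2 : ∀ᶠ ε : ℝ in 𝓝[>] (0 : ℝ), Free z y' (z i + ε * (d * ev γ)) := by
    apply cone_free h hs'
    · rw [h2', ← hd]
      have := cone_scale hr' one_pos hd0 c1'
      simpa using this
    · rw [h1, h2']
      exact cone_scale hr' hρ hd0 c2'
  obtain ⟨ε, g1, g2⟩ := (f1.and f2).exists
  exact ⟨_, g1, g2⟩

end PolyAux

namespace PolyAux
open Filter Topology

/-- total angle of the polygon seen from `x` -/
noncomputable def wind {n : ℕ} [NeZero n] (z : ZMod n → ℂ) (x : ℂ) : ℝ :=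
  ∑ i, Complex.arg ((z (i + 1) - x) / (z i - x))

theorem ratio_slit {g h x : ℂ} (hx : x ∉ segment ℝ g h) : (h - x) / (g - x) ∈ Complex.slitPlane := by
  have hg : g - x ≠ 0 := by
    intro h0
    apply hx
    rw [sub_eq_zero] at h0
    rw [← h0]; exact left_mem_segment _ _ _
  have : -(-((h - x) / (g - x))) ∈ Complex.slitPlane := by
    apply slit_of
    intro a b ha hb hab
    apply hx
    rw [mem_seg_iff]
    field_simp at hab
    refine ⟨a / (a + b), by positivity, ?_, ?_⟩
    · rw [div_le_one (by positivity)]; linarith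
    · have : (a + b : ℂ) ≠ 0 := by
        have : (a + b : ℝ) ≠ 0 := by positivity
        exact_mod_cast this
      push_cast
      field_simp
      linear_combination hab
  simpa using this

theorem not_mem_ce {n : ℕ} {z : ZMod n → ℂ} {x : ℂ} (hx : x ∉ CB z) (i : ZMod n) : x ∉ CE z i :=
  fun h => hx (ce_sub z i h)

theorem wind_cont {n : ℕ} [NeZero n] (z : ZMod n → ℂ) : ContinuousOn (wind z) (CB z)ᶜ := by
  unfold wind
  apply continuousOn_finsetSum
  intro i _ x hx
  apply ContinuousAt.continuousWithinAt
  have h1 := ratio_slit (not_mem_ce hx i)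
  have h2 : z i - x ≠ 0 := by
    intro h0
    rw [sub_eq_zero] at h0
    exact hx (h0 ▸ vert_mem z i)
  have h3 : ContinuousAt (fun x => (z (i + 1) - x) / (z i - x)) x := by
    apply ContinuousAt.div (by fun_prop) (by fun_prop) h2
  exact ContinuousAt.comp (f := fun x => (z (i + 1) - x) / (z i - x)) (Complex.continuousAt_arg h1) h3

theorem wind_int {n : ℕ} [NeZero n] (z : ZMod n → ℂ) {x : ℂ} (hx : x ∉ CB z) :
    ∃ k : ℤ, wind z x = k * (2 * Real.pi) := by
  have h2 : ∀ i, z i - x ≠ 0 := by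
    intro i h0
    rw [sub_eq_zero] at h0
    exact hx (h0 ▸ vert_mem z i)
  have hprod : ∏ i, ((z (i + 1) - x) / (z i - x)) = 1 := by
    rw [Finset.prod_div_distrib]
    have : ∏ i, (z (i + 1) - x) = ∏ i, (z i - x) :=
      Fintype.prod_equiv (Equiv.addRight 1) _ _ (fun i => rfl)
    rw [this]
    exact div_self (Finset.prod_ne_zero_iff.2 (fun i _ => h2 i))
  have hnorm : ∏ i, ‖(z (i + 1) - x) / (z i - x)‖ = 1 := by
    rw [← norm_prod, hprod, norm_one]
  have hexp : Complex.exp ((wind z x : ℝ) * Complex.I) = 1 := by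
    unfold wind
    push_cast
    rw [Finset.sum_mul, Complex.exp_sum]
    have h4 : ∏ i, (((‖(z (i + 1) - x) / (z i - x)‖ : ℝ) : ℂ) *
        Complex.exp (((z (i + 1) - x) / (z i - x)).arg * Complex.I)) = 1 := by
      rw [← hprod]
      apply Finset.prod_congr rfl
      intro i _
      exact Complex.norm_mul_exp_arg_mul_I _
    rw [Finset.prod_mul_distrib, ← Complex.ofReal_prod, hnorm] at h4
    simpa using h4
  rw [Complex.exp_eq_one_iff] at hexp
  obtain ⟨k, hk⟩ := hexp
  refine ⟨k, ?_⟩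
  have h5 : ((wind z x : ℝ) : ℂ) = ((k * (2 * Real.pi) : ℝ) : ℂ) := by
    apply mul_right_cancel₀ Complex.I_ne_zero
    rw [hk]; push_cast; ring
  exact_mod_cast h5

theorem wind_const {n : ℕ} [NeZero n] (z : ZMod n → ℂ) {S : Set ℂ} (hS : IsPreconnected S)
    (hB : S ⊆ (CB z)ᶜ) {x y : ℂ} (hx : x ∈ S) (hy : y ∈ S) : wind z x = wind z y := by
  have hpi := Real.pi_pos
  by_contra hne
  wlog hlt : wind z x < wind z y generalizing x y
  · exact this hy hx (Ne.symm hne) (lt_of_le_of_ne (not_lt.1 hlt) (Ne.symm hne))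
  obtain ⟨k, hk⟩ := wind_int z (hB hx)
  obtain ⟨l, hl⟩ := wind_int z (hB hy)
  have hkl : (k : ℝ) < l := by
    rw [hk, hl] at hlt
    exact lt_of_mul_lt_mul_right hlt (by positivity)
  have hkl' : (k : ℝ) + 1 ≤ l := by
    have : k < l := by exact_mod_cast hkl
    exact_mod_cast this
  have hiv := hS.intermediate_value hx hy ((wind_cont z).mono hB)
  have hm : ((k : ℝ) + 1 / 2) * (2 * Real.pi) ∈ Icc (wind z x) (wind z y) := by
    rw [hk, hl]
    constructor
    · gcongr; linarith
    · gcongr; linarith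
  obtain ⟨w, hw, hw'⟩ := hiv hm
  obtain ⟨m, hm⟩ := wind_int z (hB hw)
  rw [hm] at hw'
  have h6 : (m : ℝ) = k + 1 / 2 := mul_right_cancel₀ (by positivity) hw'
  have h7 : (2 * m : ℤ) = 2 * k + 1 := by
    have : (2 * m : ℝ) = 2 * k + 1 := by linarith
    exact_mod_cast this
  omega

theorem wind_free {n : ℕ} [NeZero n] {z : ZMod n → ℂ} {x y : ℂ} (h : Free z x y) :
    wind z x = wind z y :=
  wind_const z (convex_segment x y).isPreconnected h (left_mem_segment _ _ _)
    (right_mem_segment _ _ _)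

/-- limiting value of the terms of the winding sum -/
noncomputable def limterm {n : ℕ} (z : ZMod n → ℂ) (i : ZMod n) (η : ℂ) (j : ZMod n) : ℝ :=
  if j = i then Complex.arg (-(z (i + 1) - z i) / η)
  else if j = i - 1 then Complex.arg (-η / (z (i - 1) - z i))
  else Complex.arg ((z (j + 1) - z i) / (z j - z i))

theorem slit_neg_div {n : ℕ} {z : ZMod n → ℂ} {y : ℂ} {i j k : ZMod n} (hs : Sees z y i)
    (hj : segment ℝ (z i) (z k) ⊆ CE z j) (hk : z k - z i ≠ 0) :
    -((y - z i) / (z k - z i)) ∈ Complex.slitPlane := by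
  apply slit_of
  intro a b ha hb hab
  apply sees_dir hs hj ha hb
  field_simp at hab
  linear_combination hab

theorem prev_seg {n : ℕ} (z : ZMod n → ℂ) (i : ZMod n) :
    segment ℝ (z i) (z (i - 1)) ⊆ CE z (i - 1) := by
  unfold CE
  rw [sub_add_cancel, segment_symm]

theorem inv_slit {w : ℂ} (h : w ∈ Complex.slitPlane) : w⁻¹ ∈ Complex.slitPlane := by
  rw [Complex.mem_slitPlane_iff_arg] at h ⊢
  refine ⟨?_, inv_ne_zero h.2⟩
  rw [Complex.arg_inv, if_neg h.1]
  have := Complex.neg_pi_lt_arg w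
  intro h0
  linarith

theorem wind_lim {n : ℕ} [NeZero n] {z : ZMod n → ℂ} (h : CP z) {y : ℂ} {i : ZMod n}
    (hs : Sees z y i) : wind z y = ∑ j, limterm z i (y - z i) j := by
  have hη : y - z i ≠ 0 := by
    intro h0
    rw [sub_eq_zero] at h0
    exact hs.1 (h0 ▸ vert_mem z i)
  set η := y - z i with hηd
  have f0 : ∀ᶠ t : ℝ in 𝓝[>] (0 : ℝ), 0 < t := eventually_mem_nhdsWithin
  have f1 : ∀ᶠ t : ℝ in 𝓝[>] (0 : ℝ), t < 1 :=
    eventually_nhdsWithin_of_eventually_nhds (eventually_lt_nhds one_pos)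
  have hc : Tendsto (fun t : ℝ => wind z (z i + t * η)) (𝓝[>] 0) (𝓝 (wind z y)) := by
    apply tendsto_const_nhds.congr'
    filter_upwards [f0, f1] with t h0 h1
    apply wind_free
    intro w hw hwB
    rw [mem_seg_iff] at hw
    obtain ⟨s, hs0, hs1, rfl⟩ := hw
    have := hs.2 (y + s * (z i + t * η - y)) (by
      rw [mem_seg_iff]
      refine ⟨s * (1 - t), mul_nonneg hs0 (by linarith), by nlinarith, ?_⟩
      rw [hηd]; push_cast; ring) hwB
    have e : ((1 - s * (1 - t) : ℝ) : ℂ) * η = 0 := by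
      push_cast
      rw [hηd] at this ⊢
      linear_combination this
    rcases mul_eq_zero.1 e with e | e
    · have : 1 - s * (1 - t) = 0 := by exact_mod_cast e
      nlinarith
    · exact hη e
  refine tendsto_nhds_unique hc ?_
  unfold wind
  apply tendsto_finsetSum
  intro j _
  have cont_at : ∀ g : ℝ → ℂ, ContinuousAt g 0 → g 0 ∈ Complex.slitPlane →
      Tendsto (fun t => Complex.arg (g t)) (𝓝[>] 0) (𝓝 (Complex.arg (g 0))) := by
    intro g hg hg0
    apply tendsto_nhdsWithin_of_tendsto_nhds
    exact (ContinuousAt.comp (f := g) (Complex.continuousAt_arg hg0) hg)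
  unfold limterm
  split_ifs with h1 h2
  · subst h1
    have s1 := slit_neg_div hs (k := j + 1) (j := j) subset_rfl (vert_ne h j)
    replace s1 := inv_slit s1
    have := cont_at (fun t => -(z (j + 1) - z j - t * η) / η) (by fun_prop) (by
      convert s1 using 1
      simp
      rw [← neg_div, neg_sub])
    simp only [Complex.ofReal_zero, zero_mul, sub_zero] at this
    refine this.congr' ?_
    filter_upwards [f0] with t ht
    have : (t : ℂ) ≠ 0 := by exact_mod_cast ht.ne'
    rw [← Complex.arg_real_mul _ (inv_pos.2 ht)]
    congr 1
    push_cast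
    field_simp
    ring
  · subst h2
    have s1 := slit_neg_div hs (prev_seg z i) (vert_ne' h i)
    have := cont_at (fun t => -η / (z (i - 1) - z i - t * η)) (by
      apply ContinuousAt.div (by fun_prop) (by fun_prop)
      simpa using vert_ne' h i) (by
      convert s1 using 1
      simp; rw [neg_div])
    simp only [Complex.ofReal_zero, zero_mul, sub_zero] at this
    refine this.congr' ?_
    filter_upwards [f0] with t ht
    rw [← Complex.arg_real_mul _ ht]
    congr 1
    rw [sub_add_cancel, ← mul_div_assoc]
    congr 1 <;> ring
  · have hv : z i ∉ CE z j := by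
      intro hh
      rcases vert_edge h hh with h3 | h3
      · exact h1 h3
      · exact h2 h3
    have := cont_at (fun t => (z (j + 1) - (z i + t * η)) / (z j - (z i + t * η))) (by
      apply ContinuousAt.div (by fun_prop) (by fun_prop)
      simp
      intro h0
      rw [sub_eq_zero] at h0
      exact hv (h0 ▸ ce_left z j)) (by
      have := ratio_slit hv
      simpa using this)
    simpa using this

theorem limsum {n : ℕ} [NeZero n] {z : ZMod n → ℂ} (h : CP z) {y y' : ℂ} {i : ZMod n}
    (hs : Sees z y i) (hs' : Sees z y' i) (hw : wind z y = wind z y') :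
    Complex.arg (-(z (i + 1) - z i) / (y - z i)) + Complex.arg (-(y - z i) / (z (i - 1) - z i)) =
    Complex.arg (-(z (i + 1) - z i) / (y' - z i)) +
      Complex.arg (-(y' - z i) / (z (i - 1) - z i)) := by
  rw [wind_lim h hs, wind_lim h hs'] at hw
  have hne : i - 1 ≠ i := by
    intro h0
    exact vert_ne' h i (by rw [h0, sub_self])
  have := sub_eq_zero.2 hw
  rw [← Finset.sum_sub_distrib, Finset.sum_eq_add i (i - 1) hne.symm] at this
  · simp [limterm, hne] at this
    simp only [neg_sub]
    linarith
  · intro c _ hc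
    simp [limterm, hc.1, hc.2]
  · simp
  · simp

theorem arg_val {d e η : ℂ} (hd : d ≠ 0) {ρ θ r α : ℝ} (hρ : 0 < ρ) (hr : 0 < r)
    (hθ0 : 0 < θ) (hθ1 : θ < 2 * Real.pi) (hα0 : 0 < α) (hα1 : α < 2 * Real.pi)
    (h1 : e = d * (ρ * ev θ)) (h2 : η = d * (r * ev α)) (hne : α ≠ θ) :
    Complex.arg (-d / η) + Complex.arg (-η / e) = if α < θ then 2 * Real.pi - θ else - θ := by
  have evpi : ev Real.pi = -1 := by simp [ev]
  have evmpi : ev (-Real.pi) = -1 := by simp [ev]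
  have hρ' : (ρ : ℂ) ≠ 0 := by exact_mod_cast hρ.ne'
  have hr' : (r : ℂ) ≠ 0 := by exact_mod_cast hr.ne'
  have a1 : -d / η = ((r⁻¹ : ℝ) : ℂ) * ev (Real.pi - α) := by
    rw [h2, sub_eq_add_neg, ev_add, evpi]
    have := ev_neg_mul α
    have h3 := ev_ne α
    push_cast
    field_simp
    linear_combination this
  have a2 : -η / e = ((r / ρ : ℝ) : ℂ) * (-1 * (ev (α - θ))) := by
    rw [h1, h2, sub_eq_add_neg, ev_add]
    have := ev_neg_mul θ
    have h3 := ev_ne θ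
    push_cast
    field_simp
    linear_combination ev α * this
  rw [a1, arg_ev (by positivity) (by linarith) (by linarith), a2]
  split_ifs with hlt
  · rw [← evpi, ← ev_add, arg_ev (by positivity) (by linarith) (by linarith)]; ring
  · have : θ < α := lt_of_le_of_ne (not_lt.1 hlt) hne.symm
    rw [← evmpi, ← ev_add, arg_ev (by positivity) (by linarith) (by linarith)]; ring

/-- meeting lemma -/
theorem meet {n : ℕ} [NeZero n] {z : ZMod n → ℂ} (h : CP z) {y y' : ℂ} {i : ZMod n}
    (hs : Sees z y i) (hs' : Sees z y' i) (hw : wind z y = wind z y') :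
    ∃ q, Free z y q ∧ Free z y' q := by
  obtain ⟨ρ, θ, hρ, hθ0, hθ1, h1⟩ := prev_polar h i
  obtain ⟨r, α, hr, hα0, hα1, h2⟩ := sees_polar h hs
  obtain ⟨r', α', hr', hα0', hα1', h2'⟩ := sees_polar h hs'
  have hne := sees_ne hs hρ hr h1 h2
  have hne' := sees_ne hs' hρ hr' h1 h2'
  have hpi := Real.pi_pos
  have hl := limsum h hs hs' hw
  rw [arg_val (vert_ne h i) hρ hr hθ0 hθ1 hα0 hα1 h1 h2 hne,
    arg_val (vert_ne h i) hρ hr' hθ0 hθ1 hα0' hα1' h1 h2' hne'] at hl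
  apply meet_aux h hs hs' hρ hr hr' hθ0 hθ1 hα0 hα1 hα0' hα1' h1 h2 h2'
  split_ifs at hl with c1 c2 c2
  · exact Or.inl ⟨c1, c2⟩
  · linarith
  · linarith
  · exact Or.inr ⟨lt_of_le_of_ne (not_lt.1 c1) hne.symm, lt_of_le_of_ne (not_lt.1 c2) hne'.symm⟩

theorem wind_zero {n : ℕ} [NeZero n] {z : ZMod n → ℂ} {x : ℂ} (hx : ∀ i, 0 < (z i - x).re) :
    wind z x = 0 := by
  have key : ∀ i, Complex.arg ((z (i + 1) - x) / (z i - x)) =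
      Complex.arg (z (i + 1) - x) - Complex.arg (z i - x) := by
    intro i
    have h1 := abs_lt.1 (Complex.abs_arg_lt_pi_div_two_iff.2 (Or.inl (hx i)))
    have h2 := abs_lt.1 (Complex.abs_arg_lt_pi_div_two_iff.2 (Or.inl (hx (i + 1))))
    have n1 : z i - x ≠ 0 := by intro h0; have := hx i; rw [h0] at this; simp at this
    have n2 : z (i + 1) - x ≠ 0 := by
      intro h0; have := hx (i + 1); rw [h0] at this; simp at this
    have hpi := Real.pi_pos
    have i1 : Complex.arg (z i - x)⁻¹ = - Complex.arg (z i - x) := by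
      rw [Complex.arg_inv, if_neg]
      intro h0; linarith
    rw [div_eq_mul_inv, Complex.arg_mul n2 (inv_ne_zero n1), i1]
    · ring
    · rw [i1]; constructor <;> linarith
  unfold wind
  simp_rw [key]
  rw [Finset.sum_sub_distrib, sub_eq_zero]
  exact Fintype.sum_equiv (Equiv.addRight 1) _ _ (fun i => rfl)

end PolyAux

namespace PolyAux
open Filter Topology

theorem rev_ce {n : ℕ} (z : ZMod n → ℂ) (i : ZMod n) :
    CE (fun j => z (-j)) i = CE z (-i - 1) := by
  unfold CE
  beta_reduce
  rw [segment_symm, sub_add_cancel, neg_add, sub_eq_add_neg]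

theorem rev_cb {n : ℕ} (z : ZMod n → ℂ) : CB (fun j => z (-j)) = CB z := by
  ext x
  simp only [CB, mem_iUnion, rev_ce]
  constructor
  · rintro ⟨i, hi⟩; exact ⟨_, hi⟩
  · rintro ⟨i, hi⟩
    refine ⟨-i - 1, ?_⟩
    convert hi using 2
    ring

theorem rev_cp {n : ℕ} {z : ZMod n → ℂ} (h : CP z) : CP (fun j => z (-j)) where
  three_le := h.three_le
  inj := fun a b hab => neg_injective (h.inj hab)
  consec := by
    intro i
    rw [rev_ce, rev_ce]
    have := h.consec (-(i + 1) - 1)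
    rw [inter_comm]
    convert this using 2
    · congr 1; ring
    · congr 1; ring
  nonconsec := by
    intro i j h1 h2 h3
    rw [rev_ce, rev_ce]
    apply h.nonconsec
    · intro h0; apply h1; linear_combination -h0
    · intro h0; apply h3; linear_combination h0
    · intro h0; apply h2; linear_combination h0

theorem see_prev {n : ℕ} [NeZero n] {z : ZMod n → ℂ} (h : CP z) {y : ℂ} {i : ZMod n}
    (hs : Sees z y i) : ∃ q, Free z y q ∧ Sees z q (i - 1) := by
  have hs' : Sees (fun j => z (-j)) y (-i) := by
    unfold Sees
    rw [rev_cb]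
    simpa [Sees] using hs
  obtain ⟨q, h1, h2⟩ := see_next (rev_cp h) hs'
  refine ⟨q, ?_, ?_⟩
  · simpa [Free, rev_cb] using h1
  · unfold Sees at h2
    rw [rev_cb] at h2
    have e : -(-i + 1) = i - 1 := by ring
    simp only [e] at h2
    exact h2

theorem univ_of_succ {n : ℕ} [NeZero n] {A : Finset (ZMod n)} (hA : A.Nonempty)
    (h : ∀ i ∈ A, i + 1 ∈ A) : A = Finset.univ := by
  obtain ⟨a, ha⟩ := hA
  have : ∀ k : ℕ, a + k ∈ A := by
    intro k
    induction k with
    | zero => simpa using ha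
    | succ k ih => have := h _ ih; push_cast; rwa [← add_assoc]
  ext x
  simp only [Finset.mem_univ, iff_true]
  have := this (x - a).val
  rw [ZMod.natCast_zmod_val] at this
  simpa using this

theorem univ_of_pred {n : ℕ} [NeZero n] {A : Finset (ZMod n)} (hA : A.Nonempty)
    (h : ∀ i ∈ A, i - 1 ∈ A) : A = Finset.univ := by
  obtain ⟨a, ha⟩ := hA
  have : ∀ k : ℕ, a - k ∈ A := by
    intro k
    induction k with
    | zero => simpa using ha
    | succ k ih => have := h _ ih; push_cast; rwa [← sub_sub]
  ext x
  simp only [Finset.mem_univ, iff_true]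
  have := this (a - x).val
  rw [ZMod.natCast_zmod_val] at this
  simpa using this

theorem growth {n : ℕ} [NeZero n] {A B : Finset (ZMod n)} (hA : A.Nonempty) (hAB : A ⊆ B)
    (h1 : ∀ i ∈ A, i + 1 ∈ B) (h2 : ∀ i ∈ A, i - 1 ∈ B) : min n (A.card + 2) ≤ B.card := by
  by_cases hB : B = Finset.univ
  · subst hB
    rw [Finset.card_univ, ZMod.card]
    exact min_le_left _ _
  refine (min_le_right _ _).trans ?_
  by_contra hlt
  push Not at hlt
  have hAu : A ≠ Finset.univ := by
    intro h0; apply hB; rw [h0] at hAB; exact Finset.univ_subset_iff.1 hAB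
  have e1 : ∃ i ∈ A, i + 1 ∉ A := by
    by_contra hc; push Not at hc; exact hAu (univ_of_succ hA hc)
  have e2 : ∃ i ∈ A, i - 1 ∉ A := by
    by_contra hc; push Not at hc; exact hAu (univ_of_pred hA hc)
  obtain ⟨i, hi, hi'⟩ := e1
  obtain ⟨j, hj, hj'⟩ := e2
  set c := i + 1 with hc
  have hcB : insert c A ⊆ B := by
    intro x hx
    rcases Finset.mem_insert.1 hx with rfl | hx
    · exact h1 i hi
    · exact hAB hx
  have hBe : insert c A = B := by
    apply Finset.eq_of_subset_of_card_le hcB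
    rw [Finset.card_insert_of_notMem hi']
    omega
  have hjc : j - 1 = c := by
    have := h2 j hj
    rw [← hBe] at this
    rcases Finset.mem_insert.1 this with h0 | h0
    · exact h0
    · exact absurd h0 hj'
  apply hB
  apply univ_of_succ (hA.mono hAB)
  intro x hx
  rw [← hBe] at hx
  rcases Finset.mem_insert.1 hx with rfl | hx
  · rw [← hjc, sub_add_cancel]; exact hAB hj
  · exact h1 x hx

/-- reachable by `k` free segments -/
def Reach {n : ℕ} (z : ZMod n → ℂ) (a : ℂ) : ℕ → ℂ → Prop
  | 0, y => y = a
  | k + 1, y => ∃ x, Reach z a k x ∧ Free z x y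

open Classical in
/-- vertices seen from points at distance at most `k` -/
noncomputable def Vis {n : ℕ} [NeZero n] (z : ZMod n → ℂ) (a : ℂ) (k : ℕ) : Finset (ZMod n) :=
  Finset.univ.filter (fun i => ∃ y, Reach z a k y ∧ Sees z y i)

theorem mem_vis {n : ℕ} [NeZero n] (z : ZMod n → ℂ) (a : ℂ) (k : ℕ) (i : ZMod n) :
    i ∈ Vis z a k ↔ ∃ y, Reach z a k y ∧ Sees z y i := by
  simp [Vis]

theorem vis_card {n : ℕ} [NeZero n] {z : ZMod n → ℂ} (h : CP z) {a : ℂ}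
    (h0 : 2 ≤ (Vis z a 0).card) (k : ℕ) : min n (2 * k + 2) ≤ (Vis z a k).card := by
  induction k with
  | zero => exact (min_le_right _ _).trans h0
  | succ k ih =>
    have hn := h.three_le
    have hne : (Vis z a k).Nonempty := by
      rw [← Finset.card_pos]
      refine lt_of_lt_of_le ?_ ih
      apply lt_min <;> omega
    have := growth hne (B := Vis z a (k + 1)) (by
      intro i hi
      rw [mem_vis] at hi ⊢
      obtain ⟨y, h1, h2⟩ := hi
      refine ⟨y, ⟨y, h1, ?_⟩, h2⟩
      intro w hw
      rw [segment_same] at hw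
      rw [mem_singleton_iff.1 hw]
      exact h2.1) (by
      intro i hi
      rw [mem_vis] at hi ⊢
      obtain ⟨y, h1, h2⟩ := hi
      obtain ⟨q, h3, h4⟩ := see_next h h2
      exact ⟨q, ⟨y, h1, h3⟩, h4⟩) (by
      intro i hi
      rw [mem_vis] at hi ⊢
      obtain ⟨y, h1, h2⟩ := hi
      obtain ⟨q, h3, h4⟩ := see_prev h h2
      exact ⟨q, ⟨y, h1, h3⟩, h4⟩)
    omega

theorem reach_wind {n : ℕ} [NeZero n] {z : ZMod n → ℂ} {a : ℂ} (k : ℕ) {y : ℂ}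
    (h : Reach z a k y) : wind z y = wind z a := by
  induction k generalizing y with
  | zero => rw [show y = a from h]
  | succ k ih =>
    obtain ⟨x, h1, h2⟩ := h
    rw [← wind_free h2, ih h1]

theorem free_symm {n : ℕ} {z : ZMod n → ℂ} {x y : ℂ} (h : Free z x y) : Free z y x := by
  intro w hw
  rw [segment_symm] at hw
  exact h w hw

theorem reach_trans {n : ℕ} {z : ZMod n → ℂ} {a b c : ℂ} {k : ℕ} (h : Free z a b)
    (h' : Reach z b k c) : Reach z a (k + 1) c := by
  induction k generalizing c with
  | zero => rw [show c = b from h']; exact ⟨a, rfl, h⟩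
  | succ k ih =>
    obtain ⟨x, h1, h2⟩ := h'
    exact ⟨x, ih h1, h2⟩

theorem reach_symm {n : ℕ} {z : ZMod n → ℂ} {a b : ℂ} {k : ℕ} (h : Reach z a k b) :
    Reach z b k a := by
  induction k generalizing b with
  | zero => exact (show b = a from h).symm
  | succ k ih =>
    obtain ⟨x, h1, h2⟩ := h
    exact reach_trans (free_symm h2) (ih h1)

theorem count_case {n : ℕ} [NeZero n] {z : ZMod n → ℂ} (h : CP z) {a b : ℂ}
    (ha : 2 ≤ (Vis z a 0).card) (hb : 3 ≤ (Vis z b 0).card) (hw : wind z a = wind z b) :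
    Reach z a ((n + 1) / 2) b := by
  have hn := h.three_le
  obtain ⟨m, hm⟩ : ∃ m, (n + 1) / 2 = m + 2 := ⟨(n + 1) / 2 - 2, by omega⟩
  rw [hm]
  have h1 := vis_card h ha m
  have : ¬ Disjoint (Vis z a m) (Vis z b 0) := by
    intro hd
    have := Finset.card_le_univ (Vis z a m ∪ Vis z b 0)
    rw [Finset.card_union_of_disjoint hd, ZMod.card] at this
    omega
  rw [Finset.not_disjoint_iff] at this
  obtain ⟨i, hi, hi'⟩ := this
  rw [mem_vis] at hi hi'
  obtain ⟨y, hy, hs⟩ := hi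
  obtain ⟨y', hy', hs'⟩ := hi'
  have e : y' = b := hy'
  subst e
  obtain ⟨q, h2, h3⟩ := meet h hs hs' (by rw [reach_wind m hy, hw])
  exact ⟨q, ⟨y, hy, h2⟩, free_symm h3⟩

end PolyAux

namespace PolyAux
open Filter Topology

theorem dual_basis {X G : ℂ} (h : X.re * G.im - X.im * G.re ≠ 0) :
    ∃ α β : ℂ →ₗ[ℝ] ℝ, (∀ v : ℂ, v = α v * X + β v * G) ∧ α X = 1 ∧ α G = 0 ∧ β X = 0 ∧ β G = 1 := by
  set D := X.re * G.im - X.im * G.re with hD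
  refine ⟨(G.im / D) • Complex.reLm - (G.re / D) • Complex.imLm,
    (X.re / D) • Complex.imLm - (X.im / D) • Complex.reLm, ?_, ?_, ?_, ?_, ?_⟩
  · intro v
    apply Complex.ext
    · simp
      field_simp
      rw [hD]; ring
    · simp
      field_simp
      rw [hD]; ring
  · simp; field_simp; rw [hD]; ring
  · simp; field_simp; ring
  · simp; field_simp; ring
  · simp; field_simp; rw [hD]

theorem lin_seg (α : ℂ →ₗ[ℝ] ℝ) (a p q : ℂ) (t : ℝ) :
    α (p + t * (q - p) - a) = α (p - a) + t * (α (q - a) - α (p - a)) := by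
  have : p + t * (q - p) - a = (p - a) + t • ((q - a) - (p - a)) := by
    rw [Complex.real_smul]; ring
  rw [this, map_add, map_smul, smul_eq_mul, map_sub α (q - a) (p - a)]

theorem edge_pt {n : ℕ} {z : ZMod n → ℂ} (h : CP z) {k f : ZMod n} (hkf : f ≠ k) {w : ℂ}
    (h1 : w ∈ CE z k) (h2 : w ∈ CE z f) : w = z k ∨ w = z (k + 1) := by
  by_cases c1 : f = k + 1
  · subst c1
    have : w ∈ CE z k ∩ CE z (k + 1) := ⟨h1, h2⟩
    rw [h.consec] at this
    exact Or.inr this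
  by_cases c2 : k = f + 1
  · subst c2
    have : w ∈ CE z f ∩ CE z (f + 1) := ⟨h2, h1⟩
    rw [h.consec] at this
    exact Or.inl this
  have : w ∈ CE z k ∩ CE z f := ⟨h1, h2⟩
  rw [h.nonconsec k f hkf c1 c2] at this
  exact absurd this (Set.notMem_empty _)

set_option maxHeartbeats 2000000 in
theorem hv_in {n : ℕ} [NeZero n] {z : ZMod n → ℂ} {a x g : ℂ} {j k : ZMod n}
    (ha : a ∉ CB z) (hx : ∀ w ∈ segment ℝ a x, w ∈ CB z → w = x) (hg : g = z j)
    (α β : ℂ →ₗ[ℝ] ℝ) (hco : ∀ v : ℂ, v = α v * (x - a) + β v * (g - a))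
    (a1 : α (x - a) = 1) (a2 : α (g - a) = 0) (b1 : β (x - a) = 0) (b2 : β (g - a) = 1)
    (hk : ∀ v ∈ CE z k, α (v - a) + β (v - a) = 1)
    (hf : ∀ f, f ≠ k → ∀ σ : ℝ, 0 ≤ σ → σ < 1 → x + σ * (g - x) ∉ CE z f) :
    ∃ m, 0 ≤ α (z m - a) ∧ 0 ≤ β (z m - a) ∧ Sees z a m := by
  classical
  set S : Finset (ZMod n) := Finset.univ.filter (fun m => 0 ≤ α (z m - a) ∧ 0 ≤ β (z m - a) ∧
    α (z m - a) + β (z m - a) ≤ 1) with hS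
  have hjS : j ∈ S := by
    rw [hS, Finset.mem_filter, ← hg, a2, b2]; simp
  obtain ⟨m, hmS, hmin⟩ := Finset.exists_min_image S (fun m =>
    toLex (β (z m - a) / (α (z m - a) + β (z m - a)), α (z m - a) + β (z m - a))) ⟨j, hjS⟩
  rw [hS, Finset.mem_filter] at hmS
  obtain ⟨-, hA, hB, hAB⟩ := hmS
  have hpos : ∀ v, v ∈ CB z → 0 ≤ α (v - a) → 0 ≤ β (v - a) → 0 < α (v - a) + β (v - a) := by
    intro v hv h1 h2
    by_contra hc
    have e1 : α (v - a) = 0 := by linarith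
    have e2 : β (v - a) = 0 := by linarith
    have := hco (v - a)
    rw [e1, e2] at this
    simp at this
    rw [sub_eq_zero] at this
    exact ha (this ▸ hv)
  have hABp := hpos _ (vert_mem z m) hA hB
  have hmin1 : ∀ f, 0 ≤ α (z f - a) → 0 ≤ β (z f - a) → α (z f - a) + β (z f - a) ≤ 1 →
      ¬ (0 < α (z f - a) * β (z m - a) - β (z f - a) * α (z m - a)) := by
    intro f h1 h2 h3 h4
    have hp := hpos _ (vert_mem z f) h1 h2
    have := hmin f (by rw [hS, Finset.mem_filter]; exact ⟨Finset.mem_univ _, h1, h2, h3⟩)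
    have hlt : β (z f - a) / (α (z f - a) + β (z f - a)) <
        β (z m - a) / (α (z m - a) + β (z m - a)) := by
      rw [div_lt_div_iff₀ hp hABp]; nlinarith
    rw [Prod.Lex.toLex_le_toLex] at this
    rcases this with h5 | h5
    · exact lt_asymm h5 hlt
    · exact hlt.ne h5.1.symm
  have hmin2 : ∀ f, 0 ≤ α (z f - a) → 0 ≤ β (z f - a) →
      α (z f - a) + β (z f - a) < α (z m - a) + β (z m - a) →
      α (z f - a) * β (z m - a) - β (z f - a) * α (z m - a) = 0 → False := by
    intro f h1 h2 h3 h4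
    have hp := hpos _ (vert_mem z f) h1 h2
    have := hmin f (by
      rw [hS, Finset.mem_filter]; exact ⟨Finset.mem_univ _, h1, h2, by linarith⟩)
    have heq : β (z f - a) / (α (z f - a) + β (z f - a)) =
        β (z m - a) / (α (z m - a) + β (z m - a)) := by
      rw [div_eq_div_iff hp.ne' hABp.ne']; nlinarith
    rw [Prod.Lex.toLex_le_toLex] at this
    rcases this with h5 | h5
    · exact h5.ne' heq
    · exact absurd h5.2 (not_le.2 h3)
  refine ⟨m, hA, hB, ha, ?_⟩
  intro y hy hyP
  by_contra hne
  rw [mem_seg_iff] at hy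
  obtain ⟨s, hs0, hs1, rfl⟩ := hy
  have hs0' : 0 < s := by
    rcases hs0.eq_or_lt with h0 | h0
    · rw [← h0] at hyP; simp at hyP; exact absurd hyP ha
    · exact h0
  have hs1' : s < 1 := by
    rcases hs1.eq_or_lt with h0 | h0
    · rw [h0] at hne; simp at hne
    · exact h0
  set y := a + s * (z m - a) with hy
  have ya : α (y - a) = s * α (z m - a) := by
    rw [hy, lin_seg]; simp
  have yb : β (y - a) = s * β (z m - a) := by
    rw [hy, lin_seg]; simp
  set A := α (z m - a) with hAd
  set B := β (z m - a) with hBd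
  have hB' : 0 < B := by
    by_contra hc
    have hB0 : B = 0 := by linarith
    have hco' := hco (z m - a)
    rw [← hAd, ← hBd, hB0] at hco'
    simp at hco'
    have hyx : y = a + (s * A : ℝ) * (x - a) := by
      rw [hy, hco']; push_cast; ring
    have hsA : s * A < 1 := by nlinarith
    have := hx y (by
      rw [mem_seg_iff]
      exact ⟨s * A, by positivity, hsA.le, hyx⟩) hyP
    rw [this] at ya
    rw [a1] at ya
    linarith
  simp only [CB, mem_iUnion] at hyP
  obtain ⟨f, hyf⟩ := hyP
  have hfk : f ≠ k := by
    rintro rfl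
    have := hk _ hyf
    rw [ya, yb] at this
    nlinarith
  have hsum : α (y - a) + β (y - a) < 1 := by rw [ya, yb]; nlinarith
  -- points in the edge beyond the far side
  have far : ∀ c : ℂ, segment ℝ y c ⊆ CE z f → 0 ≤ β (c - a) →
      0 < α (c - a) * B - β (c - a) * A → 1 ≤ α (c - a) + β (c - a) → False := by
    intro c hc h1 h2 h3
    have hc1 : 0 < α (c - a) := by
      by_contra h0
      nlinarith [mul_nonneg h1 hA]
    set τ := (1 - (α (y - a) + β (y - a))) /
      (α (c - a) + β (c - a) - (α (y - a) + β (y - a))) with hτ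
    have hden : 0 < α (c - a) + β (c - a) - (α (y - a) + β (y - a)) := by linarith
    have ht0 : 0 < τ := div_pos (by linarith) hden
    have ht1 : τ ≤ 1 := (div_le_one hden).2 (by linarith)
    have hmem : y + τ * (c - y) ∈ CE z f := by
      apply hc; rw [mem_seg_iff]; exact ⟨τ, ht0.le, ht1, rfl⟩
    have l1 := lin_seg α a y c τ
    have l2 := lin_seg β a y c τ
    set w := y + τ * (c - y) with hw
    have hyb0 : 0 ≤ β (y - a) := by rw [yb]; positivity
    have hya0 : 0 ≤ α (y - a) := by rw [ya]; positivity
    have hwb : 0 ≤ β (w - a) := by rw [l2]; nlinarith [mul_nonneg ht0.le h1]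
    have hwa : 0 < α (w - a) := by
      rw [l1]; nlinarith [mul_pos ht0 hc1, mul_nonneg (sub_nonneg.2 ht1) hya0]
    have hws : α (w - a) + β (w - a) = 1 := by
      have : τ * (α (c - a) + β (c - a) - (α (y - a) + β (y - a))) =
        1 - (α (y - a) + β (y - a)) := div_mul_cancel₀ _ hden.ne'
      rw [l1, l2]; linarith
    refine hf f hfk (β (w - a)) hwb (by linarith) ?_
    convert hmem using 1
    have e := hco (w - a)
    have e2 : α (w - a) = 1 - β (w - a) := by linarith
    rw [e2] at e
    push_cast at e
    linear_combination -e
  have claim1 : ∀ v, (segment ℝ y (z v) ⊆ CE z f) →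
      ¬ 0 < α (z v - a) * B - β (z v - a) * A := by
    intro v hv hcr
    by_cases h2 : 0 ≤ β (z v - a)
    · by_cases h3 : 1 ≤ α (z v - a) + β (z v - a)
      · exact far _ hv h2 hcr h3
      · refine hmin1 v ?_ h2 (by linarith) hcr
        by_contra h0
        nlinarith [mul_nonneg h2 hA]
    · push Not at h2
      have hyb0 : 0 < β (y - a) := by rw [yb]; positivity
      set τ := β (y - a) / (β (y - a) - β (z v - a)) with hτ
      have hden : 0 < β (y - a) - β (z v - a) := by linarith
      have ht0 : 0 < τ := div_pos hyb0 hden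
      have ht1 : τ ≤ 1 := (div_le_one hden).2 (by linarith)
      have hmem : y + τ * (z v - y) ∈ segment ℝ y (z v) := by
        rw [mem_seg_iff]; exact ⟨τ, ht0.le, ht1, rfl⟩
      have l1 := lin_seg α a y (z v) τ
      have l2 := lin_seg β a y (z v) τ
      set w := y + τ * (z v - y) with hw
      have hwb : β (w - a) = 0 := by
        have : τ * (β (y - a) - β (z v - a)) = β (y - a) := div_mul_cancel₀ _ hden.ne'
        rw [l2]; linarith
      have hwcr : 0 < α (w - a) * B - β (w - a) * A := by
        have : α (w - a) * B - β (w - a) * A = τ * (α (z v - a) * B - β (z v - a) * A) := by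
          rw [l1, l2, ya, yb]; ring
        rw [this]; positivity
      have hwf := hv hmem
      by_cases h3 : 1 ≤ α (w - a) + β (w - a)
      · refine far w ?_ hwb.ge hwcr h3
        exact ((convex_segment y (z v)).segment_subset (left_mem_segment _ _ _) hmem).trans hv
      · have e := hco (w - a)
        rw [hwb, Complex.ofReal_zero, zero_mul, add_zero] at e
        have hw0 : 0 < α (w - a) := by
          rw [hwb] at hwcr
          by_contra h0
          nlinarith
        have := hx w (by
          rw [mem_seg_iff]
          exact ⟨α (w - a), hw0.le, by linarith, by linear_combination e⟩) (ce_sub z f hwf)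
        rw [this, a1, b1] at h3
        simp at h3
  have claim2 : ∀ v, (segment ℝ y (z v) ⊆ CE z f) →
      α (z v - a) * B - β (z v - a) * A = 0 →
      α (z v - a) + β (z v - a) ≤ s * (A + B) → False := by
    intro v hv h0 hle
    set l := (α (z v - a) + β (z v - a)) / (A + B) with hl
    have e1 : α (z v - a) = l * A := by rw [hl]; field_simp; linarith
    have e2 : β (z v - a) = l * B := by rw [hl]; field_simp; linarith
    have hls : l ≤ s := by rw [hl, div_le_iff₀ hABp]; exact hle
    by_cases hl0 : 0 ≤ l
    · exact hmin2 v (by rw [e1]; positivity) (by rw [e2]; positivity)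
        (by rw [e1, e2]; nlinarith) h0
    · push Not at hl0
      apply ha
      apply ce_sub z f
      apply hv
      rw [mem_seg_iff]
      have hsl : 0 < s - l := by linarith
      refine ⟨s / (s - l), by positivity, (div_le_one hsl).2 (by linarith), ?_⟩
      have c1 := hco (z v - a)
      have c2 := hco (z m - a)
      rw [e1, e2] at c1
      rw [← hAd, ← hBd] at c2
      have c3 : z v - a = l * (z m - a) := by
        rw [c1]; push_cast; linear_combination -(l : ℂ) * c2
      have hsl' : (s : ℂ) - l ≠ 0 := by exact_mod_cast hsl.ne'
      have c4 : z v - y = (l - s) * (z m - a) := by rw [hy]; linear_combination c3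
      rw [c4, hy]
      push_cast
      field_simp
      ring
  have hsub1 : segment ℝ y (z f) ⊆ CE z f :=
    (convex_segment _ _).segment_subset hyf (ce_left z f)
  have hsub2 : segment ℝ y (z (f + 1)) ⊆ CE z f :=
    (convex_segment _ _).segment_subset hyf (ce_right z f)
  have p1 := claim1 f hsub1
  have p2 := claim1 (f + 1) hsub2
  have q1 := claim2 f hsub1
  have q2 := claim2 (f + 1) hsub2
  unfold CE at hyf
  rw [mem_seg_iff] at hyf
  obtain ⟨τ, t0, t1, hτ⟩ := hyf
  have l1 := lin_seg α a (z f) (z (f + 1)) τ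
  have l2 := lin_seg β a (z f) (z (f + 1)) τ
  rw [← hτ, ya] at l1
  rw [← hτ, yb] at l2
  set v1 := α (z f - a)
  set v2 := β (z f - a)
  set w1 := α (z (f + 1) - a)
  set w2 := β (z (f + 1) - a)
  have hcr : (1 - τ) * (v1 * B - v2 * A) + τ * (w1 * B - w2 * A) = 0 := by
    linear_combination (-B) * l1 + A * l2
  have hsm : (1 - τ) * (v1 + v2) + τ * (w1 + w2) = s * (A + B) := by
    linear_combination - l1 - l2
  push Not at p1 p2
  rcases t0.eq_or_lt with h0 | h0
  · rw [← h0] at hcr hsm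
    exact q1 (by linarith) (by linarith)
  rcases t1.eq_or_lt with h1 | h1
  · rw [h1] at hcr hsm
    exact q2 (by linarith) (by linarith)
  have z1 : v1 * B - v2 * A = 0 := by
    apply le_antisymm p1
    by_contra hc
    push Not at hc
    nlinarith [mul_neg_of_pos_of_neg (sub_pos.2 h1) hc, mul_nonneg h0.le (neg_nonneg.2 p2)]
  have z2 : w1 * B - w2 * A = 0 := by
    rw [z1] at hcr
    simp at hcr
    rcases hcr with h | h
    · linarith
    · exact h
  by_cases hc : v1 + v2 ≤ s * (A + B)
  · exact q1 z1 hc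
  · apply q2 z2
    by_contra hc2
    push Not at hc hc2
    nlinarith [mul_pos (sub_pos.2 h1) (sub_pos.2 hc), mul_pos h0 (sub_pos.2 hc2)]

end PolyAux

namespace PolyAux
open Filter Topology

/-- a half-plane through `a` that meets the polygon contains a vertex seen from `a` -/
theorem hv {n : ℕ} [NeZero n] {z : ZMod n → ℂ} (h : CP z) {a : ℂ} (ha : a ∉ CB z)
    (φ : ℂ →ₗ[ℝ] ℝ) {w : ℂ} (hw : w ∈ CB z) (hφ : 0 < φ (w - a)) :
    ∃ m, 0 < φ (z m - a) ∧ Sees z a m := by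
  -- nearest point
  obtain ⟨x, hxP, hφx, hx⟩ : ∃ x ∈ CB z, 0 < φ (x - a) ∧
      ∀ w ∈ segment ℝ a x, w ∈ CB z → w = x := by
    have hcl : IsClosed {t : ℝ | a + t * (w - a) ∈ CB z} :=
      (cb_compact z).isClosed.preimage (by fun_prop)
    have hcp : IsCompact (Icc (0 : ℝ) 1 ∩ {t : ℝ | a + t * (w - a) ∈ CB z}) :=
      isCompact_Icc.inter_right hcl
    obtain ⟨t, ⟨⟨t0, t1⟩, ht⟩, hmin⟩ := hcp.exists_isLeast ⟨1, by simp, by simpa using hw⟩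
    have t0' : 0 < t := by
      rcases t0.eq_or_lt with h0 | h0
      · rw [← h0] at ht; simp at ht; exact absurd ht ha
      · exact h0
    refine ⟨a + t * (w - a), ht, ?_, ?_⟩
    · rw [lin_seg]; simp only [sub_self, map_zero, sub_zero, zero_add]; positivity
    · intro v hv hvP
      rw [mem_seg_iff] at hv
      obtain ⟨s, s0, s1, rfl⟩ := hv
      have e : a + s * (a + t * (w - a) - a) = a + (s * t : ℝ) * (w - a) := by
        push_cast; ring
      rw [e] at hvP ⊢
      have := hmin ⟨⟨by positivity, by nlinarith⟩, hvP⟩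
      have : s = 1 := by nlinarith
      rw [this, one_mul]
  by_cases hv : ∃ m, x = z m
  · obtain ⟨m, rfl⟩ := hv
    exact ⟨m, hφx, ha, hx⟩
  push Not at hv
  have hxP' := hxP
  simp only [CB, mem_iUnion] at hxP'
  obtain ⟨k, hk⟩ := hxP'
  have key : ∀ j j' : ZMod n, ∀ t : ℝ, 0 < t → t < 1 → x = z j' + t * (z j - z j') →
      segment ℝ (z j') (z j) = CE z k → (∀ v, v = z k ∨ v = z (k + 1) → v = z j ∨ v = z j') →
      0 < φ (z j - a) →
      ∃ m, 0 < φ (z m - a) ∧ Sees z a m := by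
    intro j j' t t0 t1 hxt hseg hends hφj
    have hxj : x - z j = (1 - t : ℝ) * (z j' - z j) := by rw [hxt]; push_cast; ring
    have hxj' : x - z j' = (t : ℝ) * (z j - z j') := by rw [hxt]; push_cast; ring
    by_cases hD : (x - a).re * (z j - a).im - (x - a).im * (z j - a).re = 0
    · exfalso
      have hxa : x - a ≠ 0 := by
        intro h0; rw [sub_eq_zero] at h0; exact ha (h0 ▸ hxP)
      obtain ⟨μ, hμ⟩ : ∃ μ : ℝ, z j - a = μ * (x - a) := by
        by_cases hr : (x - a).re = 0
        · have hi : (x - a).im ≠ 0 := by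
            intro h0; exact hxa (Complex.ext hr h0)
          refine ⟨(z j - a).im / (x - a).im, ?_⟩
          rw [hr] at hD
          apply Complex.ext
          · rw [Complex.re_ofReal_mul, hr]
            have : (x - a).im * (z j - a).re = 0 := by linarith
            rcases mul_eq_zero.1 this with h0 | h0
            · exact absurd h0 hi
            · rw [h0]; simp
          · rw [Complex.im_ofReal_mul, div_mul_cancel₀ _ hi]
        · refine ⟨(z j - a).re / (x - a).re, ?_⟩
          apply Complex.ext
          · rw [Complex.re_ofReal_mul, div_mul_cancel₀ _ hr]
          · rw [Complex.im_ofReal_mul, div_mul_eq_mul_div, eq_div_iff hr]; linarith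
      have gen : ∀ i, (segment ℝ x (z i) ⊆ CE z k) → ∀ μ : ℝ, z i - a = μ * (x - a) → 1 < μ := by
        intro i hi μ hμ
        by_contra hc
        push Not at hc
        by_cases h0 : 0 ≤ μ
        · apply hv i
          refine (hx (z i) ?_ (vert_mem z i)).symm
          rw [mem_seg_iff]
          exact ⟨μ, h0, hc, by linear_combination hμ⟩
        · push Not at h0
          apply ha
          apply ce_sub z k
          apply hi
          rw [mem_seg_iff]
          have hp : 0 < 1 - μ := by linarith
          refine ⟨1 / (1 - μ), by positivity, (div_le_one hp).2 (by linarith), ?_⟩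
          have hp' : (1 : ℂ) - μ ≠ 0 := by exact_mod_cast hp.ne'
          push_cast
          have : z i - x = -(1 - μ) * (x - a) := by linear_combination hμ
          rw [this]
          field_simp
          ring
      have s1 : segment ℝ x (z j) ⊆ CE z k := by
        rw [← hseg]
        exact (convex_segment _ _).segment_subset (hseg ▸ hk) (right_mem_segment _ _ _)
      have s2 : segment ℝ x (z j') ⊆ CE z k := by
        rw [← hseg]
        exact (convex_segment _ _).segment_subset (hseg ▸ hk) (left_mem_segment _ _ _)
      have g1 := gen j s1 μ hμ
      have h1t : (0 : ℝ) < 1 - t := by linarith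
      have g2 := gen j' s2 ((1 - t * μ) / (1 - t)) (by
        have : (1 : ℂ) - t ≠ 0 := by exact_mod_cast h1t.ne'
        push_cast
        field_simp
        linear_combination (-1 : ℂ) * hxt - t * hμ)
      rw [lt_div_iff₀ h1t] at g2
      nlinarith
    · obtain ⟨α, β, hco, a1, a2, b1, b2⟩ := dual_basis hD
      obtain ⟨m, m1, m2, m3⟩ := hv_in (g := z j) (j := j) (k := k) ha hx rfl α β hco a1 a2 b1 b2
        (by
          intro v hvk
          rw [← hseg, mem_seg_iff] at hvk
          obtain ⟨s, s0, s1, rfl⟩ := hvk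
          have l1 := lin_seg α a (z j') (z j) t
          have l2 := lin_seg β a (z j') (z j) t
          rw [← hxt, a1, a2] at l1
          rw [← hxt, b1, b2] at l2
          rw [lin_seg, lin_seg, a2, b2]
          have : (1 - t) * (α (z j' - a) + β (z j' - a) - 1) = 0 := by linarith
          rcases mul_eq_zero.1 this with h0 | h0
          · linarith
          · have : α (z j' - a) = 1 - β (z j' - a) := by linarith
            rw [this]; ring)
        (by
          intro f hfk σ σ0 σ1 hmem
          have hxk : x + σ * (z j - x) ∈ CE z k := by
            have s1 : segment ℝ x (z j) ⊆ CE z k := by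
              rw [← hseg]
              exact (convex_segment _ _).segment_subset (hseg ▸ hk) (right_mem_segment _ _ _)
            apply s1
            rw [mem_seg_iff]
            exact ⟨σ, σ0, σ1.le, rfl⟩
          have hne : z j - z j' ≠ 0 := by
            intro h0
            rw [h0, mul_zero, sub_eq_zero] at hxj'
            exact hv _ hxj'
          rcases hends _ (edge_pt h hfk hxk hmem) with h0 | h0
          · have : ((1 - σ : ℝ) : ℂ) * ((1 - t : ℝ) * (z j' - z j)) = 0 := by
              rw [← hxj]; push_cast; linear_combination h0
            have h5 : ((1 - σ) * (1 - t) : ℝ) = 0 := by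
              have h6 : (((1 - σ) * (1 - t) : ℝ) : ℂ) * (z j - z j') = 0 := by
                push_cast at this ⊢; linear_combination -this
              rcases mul_eq_zero.1 h6 with h7 | h7
              · exact_mod_cast h7
              · exact absurd h7 hne
            nlinarith [mul_pos (sub_pos.2 σ1) (sub_pos.2 t1)]
          · have h6 : ((t + σ * (1 - t) : ℝ) : ℂ) * (z j - z j') = 0 := by
              push_cast at hxj hxj' ⊢
              linear_combination h0 - hxj' + σ * hxj
            rcases mul_eq_zero.1 h6 with h7 | h7
            · have : t + σ * (1 - t) = 0 := by exact_mod_cast h7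
              nlinarith [mul_nonneg σ0 (sub_nonneg.2 t1.le)]
            · exact hne h7)
      refine ⟨m, ?_, m3⟩
      have e := hco (z m - a)
      have e' : φ (z m - a) = α (z m - a) * φ (x - a) + β (z m - a) * φ (z j - a) := by
        have := congrArg φ e
        rw [← Complex.real_smul, ← Complex.real_smul, map_add φ, map_smul φ, map_smul φ] at this
        exact this
      rw [e']
      have hne : ¬ (α (z m - a) = 0 ∧ β (z m - a) = 0) := by
        rintro ⟨h1, h2⟩
        rw [h1, h2] at e
        simp at e
        rw [sub_eq_zero] at e
        exact ha (e ▸ vert_mem z m)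
      rcases m1.eq_or_lt with h0 | h0
      · rcases m2.eq_or_lt with h1 | h1
        · exact absurd ⟨h0.symm, h1.symm⟩ hne
        · rw [← h0]; simp only [zero_mul, zero_add]; positivity
      · have := mul_pos h0 hφx
        have := mul_nonneg m2 hφj.le
        linarith
  have hk' := hk
  unfold CE at hk'
  rw [mem_seg_iff] at hk'
  obtain ⟨t, t0, t1, ht⟩ := hk'
  have t0' : 0 < t := by
    rcases t0.eq_or_lt with h0 | h0
    · rw [← h0] at ht; simp at ht; exact absurd ht (hv _)
    · exact h0
  have t1' : t < 1 := by
    rcases t1.eq_or_lt with h0 | h0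
    · rw [h0] at ht; simp at ht; exact absurd ht (hv _)
    · exact h0
  by_cases hc : 0 < φ (z (k + 1) - a)
  · exact key (k + 1) k t t0' t1' ht rfl (fun v hv => hv.symm) hc
  · refine key k (k + 1) (1 - t) (by linarith) (by linarith) ?_ (segment_symm _ _ _)
      (fun v hv => hv) ?_
    · rw [ht]; push_cast; ring
    · rw [ht, lin_seg] at hφx
      push Not at hc
      by_contra h0
      push Not at h0
      nlinarith [mul_nonneg t0 (neg_nonneg.2 hc), mul_nonneg (sub_nonneg.2 t1) (neg_nonneg.2 h0)]

end PolyAux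

namespace PolyAux
open Filter Topology

theorem parallel_of {c v : ℂ} (hc : c ≠ 0) (h : c.re * v.im - c.im * v.re = 0) :
    ∃ t : ℝ, v = t * c := by
  by_cases hr : c.re = 0
  · have hi : c.im ≠ 0 := by
      intro h0; exact hc (Complex.ext hr h0)
    refine ⟨v.im / c.im, ?_⟩
    rw [hr] at h
    apply Complex.ext
    · rw [Complex.re_ofReal_mul, hr]
      have : c.im * v.re = 0 := by linarith
      rcases mul_eq_zero.1 this with h0 | h0
      · exact absurd h0 hi
      · rw [h0]; simp
    · rw [Complex.im_ofReal_mul, div_mul_cancel₀ _ hi]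
  · refine ⟨v.re / c.re, ?_⟩
    apply Complex.ext
    · rw [Complex.re_ofReal_mul, div_mul_cancel₀ _ hr]
    · rw [Complex.im_ofReal_mul, div_mul_eq_mul_div, eq_div_iff hr]; linarith

/-- cross product with a fixed vector -/
noncomputable def cr (c : ℂ) : ℂ →ₗ[ℝ] ℝ := c.re • Complex.imLm - c.im • Complex.reLm

theorem cr_apply (c v : ℂ) : cr c v = c.re * v.im - c.im * v.re := by simp [cr]

theorem not_line {n : ℕ} [NeZero n] {z : ZMod n → ℂ} (h : CP z) {c : ℂ} (hc : c ≠ 0) (a : ℂ) :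
    ∃ i, cr c (z i - a) ≠ 0 := by
  by_contra hcon
  push Not at hcon
  have : ∀ i, ∃ t : ℝ, z i - a = t * c := fun i =>
    parallel_of hc (by rw [← cr_apply]; exact hcon i)
  choose t ht using this
  obtain ⟨i, -, hi⟩ := Finset.exists_max_image Finset.univ t ⟨0, Finset.mem_univ _⟩
  have lt : ∀ j, j ≠ i → t j < t i := by
    intro j hj
    apply lt_of_le_of_ne (hi j (Finset.mem_univ _))
    intro h0
    apply hj
    apply h.inj
    have h1 := ht j
    rw [h0, ← ht i] at h1
    linear_combination h1
  have l1 := lt (i + 1) (one_ne h.three_le i)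
  have l2 := lt (i - 1) (by
    intro h0
    have := one_ne h.three_le (i - 1)
    rw [sub_add_cancel] at this
    exact this h0.symm)
  apply dir_indep h i (a := t i - t (i + 1)) (b := t i - t (i - 1)) (by linarith) (by linarith)
  have e1 := ht i
  have e2 := ht (i + 1)
  have e3 := ht (i - 1)
  have f1 : z (i - 1) - z i = (t (i - 1) - t i) * c := by linear_combination e3 - e1
  have f2 : z (i + 1) - z i = (t (i + 1) - t i) * c := by linear_combination e2 - e1
  rw [f1, f2]; push_cast; ring

theorem hv_line {n : ℕ} [NeZero n] {z : ZMod n → ℂ} (h : CP z) {a : ℂ} (ha : a ∉ CB z) {c : ℂ}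
    (hc : c ≠ 0) : ∃ m, cr c (z m - a) ≠ 0 ∧ Sees z a m := by
  obtain ⟨i, hi⟩ := not_line h hc a
  rcases lt_or_gt_of_ne hi with h0 | h0
  · obtain ⟨m, h1, h2⟩ := hv h ha (-(cr c)) (vert_mem z i) (by
      rw [LinearMap.neg_apply]; linarith)
    rw [LinearMap.neg_apply] at h1
    exact ⟨m, by linarith, h2⟩
  · obtain ⟨m, h1, h2⟩ := hv h ha (cr c) (vert_mem z i) h0
    exact ⟨m, h1.ne', h2⟩

def Outside {n : ℕ} (z : ZMod n → ℂ) (a : ℂ) : Prop := ∃ u : ℂ, ∀ i, 0 < (u * (z i - a)).re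

theorem lin_repr (φ : ℂ →ₗ[ℝ] ℝ) : ∃ u : ℂ, ∀ v, φ v = (u * v).re := by
  refine ⟨⟨φ 1, -φ Complex.I⟩, fun v => ?_⟩
  have : v = v.re • (1 : ℂ) + v.im • Complex.I := by
    apply Complex.ext <;> simp
  conv_lhs => rw [this, map_add, map_smul, map_smul]
  simp; ring

theorem mem_vis0 {n : ℕ} [NeZero n] (z : ZMod n → ℂ) (a : ℂ) (i : ZMod n) :
    i ∈ Vis z a 0 ↔ Sees z a i := by
  rw [mem_vis]
  constructor
  · rintro ⟨y, h1, h2⟩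
    rwa [show y = a from h1] at h2
  · intro h; exact ⟨a, rfl, h⟩

theorem count0 {n : ℕ} [NeZero n] {z : ZMod n → ℂ} (h : CP z) {a : ℂ} (ha : a ∉ CB z) :
    2 ≤ (Vis z a 0).card ∧ (3 ≤ (Vis z a 0).card ∨ Outside z a) := by
  have hne : ∀ i, z i - a ≠ 0 := by
    intro i h0
    rw [sub_eq_zero] at h0
    exact ha (h0 ▸ vert_mem z i)
  obtain ⟨i, -, hi⟩ := hv_line h ha (one_ne_zero)
  obtain ⟨j, hj0, hj⟩ := hv_line h ha (hne i)
  have hij : i ≠ j := by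
    rintro rfl
    apply hj0; rw [cr_apply]; ring
  have hsub : {i, j} ⊆ Vis z a 0 := by
    intro x hx
    rw [mem_vis0]
    simp at hx
    rcases hx with rfl | rfl
    · exact hi
    · exact hj
  have h2 : 2 ≤ (Vis z a 0).card := by
    rw [← Finset.card_pair hij]
    exact Finset.card_le_card hsub
  refine ⟨h2, ?_⟩
  by_cases h3 : 3 ≤ (Vis z a 0).card
  · exact Or.inl h3
  right
  have heq : {i, j} = Vis z a 0 := by
    apply Finset.eq_of_subset_of_card_le hsub
    rw [Finset.card_pair hij]; omega
  have honly : ∀ m, Sees z a m → m = i ∨ m = j := by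
    intro m hm
    rw [← mem_vis0, ← heq] at hm
    simpa using hm
  rw [cr_apply] at hj0
  obtain ⟨α, β, hco, a1, a2, b1, b2⟩ := dual_basis hj0
  have pos : ∀ φ : ℂ →ₗ[ℝ] ℝ, 0 ≤ φ (z i - a) → 0 ≤ φ (z j - a) → ∀ m, 0 ≤ φ (z m - a) := by
    intro φ h4 h5 m
    by_contra hc
    push Not at hc
    obtain ⟨k, k1, k2⟩ := hv h ha (-φ) (vert_mem z m) (by
      rw [LinearMap.neg_apply]; linarith)
    rw [LinearMap.neg_apply] at k1
    rcases honly k k2 with rfl | rfl <;> linarith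
  obtain ⟨u, hu⟩ := lin_repr (α + β)
  refine ⟨u, fun m => ?_⟩
  rw [← hu, LinearMap.add_apply]
  have p1 := pos α (by linarith) (by linarith) m
  have p2 := pos β (by linarith) (by linarith) m
  by_contra hc
  have e1 : α (z m - a) = 0 := by linarith
  have e2 : β (z m - a) = 0 := by linarith
  have := hco (z m - a)
  rw [e1, e2] at this
  simp at this
  exact hne m (by simpa using this)

theorem out_body {n : ℕ} {z : ZMod n → ℂ} {a u : ℂ} (hu : ∀ i, 0 < (u * (z i - a)).re) {w : ℂ}
    (hw : w ∈ CB z) : 0 < (u * (w - a)).re := by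
  simp only [CB, mem_iUnion] at hw
  obtain ⟨i, hi⟩ := hw
  unfold CE at hi
  rw [mem_seg_iff] at hi
  obtain ⟨t, t0, t1, rfl⟩ := hi
  have e : u * (z i + t * (z (i + 1) - z i) - a) =
    ((1 - t : ℝ) : ℂ) * (u * (z i - a)) + (t : ℝ) * (u * (z (i + 1) - a)) := by
    push_cast; ring
  rw [e, Complex.add_re, Complex.re_ofReal_mul, Complex.re_ofReal_mul]
  have h1 := hu i
  have h2 := hu (i + 1)
  rcases t0.eq_or_lt with h0 | h0
  · rw [← h0]; simpa using h1
  · have := mul_pos h0 h2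
    have := mul_nonneg (sub_nonneg.2 t1) h1.le
    linarith

theorem out_free {n : ℕ} {z : ZMod n → ℂ} {a u q : ℂ} (hu : ∀ i, 0 < (u * (z i - a)).re)
    (hq : (u * q).re = (u * a).re) : Free z a q := by
  intro w hw hwP
  have := out_body hu hwP
  rw [mem_seg_iff] at hw
  obtain ⟨t, t0, t1, rfl⟩ := hw
  have e : u * (a + t * (q - a) - a) = (t : ℝ) * (u * q - u * a) := by ring
  rw [e, Complex.re_ofReal_mul, Complex.sub_re, hq] at this
  simp at this

theorem out_pair {n : ℕ} {z : ZMod n → ℂ} {a b u u' : ℂ} (hu : ∀ i, 0 < (u * (z i - a)).re)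
    (hu' : ∀ i, 0 < (u' * (z i - b)).re) (hD : u.re * u'.im - u.im * u'.re ≠ 0) :
    Reach z a 2 b := by
  set D := u.re * u'.im - u.im * u'.re with hDd
  set r := (u * a).re
  set r' := (u' * b).re
  obtain ⟨q, q1, q2⟩ : ∃ q : ℂ, (u * q).re = r ∧ (u' * q).re = r' := by
    refine ⟨⟨(r * u'.im - r' * u.im) / D, (u'.re * r - u.re * r') / D⟩, ?_, ?_⟩
    · rw [Complex.mul_re]; dsimp only; field_simp; rw [hDd]; ring
    · rw [Complex.mul_re]; dsimp only; field_simp; rw [hDd]; ring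
  exact ⟨q, ⟨a, rfl, out_free hu q1⟩, free_symm (out_free hu' q2)⟩

theorem out_out {n : ℕ} [NeZero n] {z : ZMod n → ℂ} {a b : ℂ} (ha : Outside z a)
    (hb : Outside z b) : Reach z a 2 b := by
  obtain ⟨u, hu⟩ := ha
  obtain ⟨u', hu'⟩ := hb
  by_cases hD : u.re * u'.im - u.im * u'.re = 0
  · have hu0 : u ≠ 0 := by
      rintro rfl
      have := hu 0
      simp at this
    have hu0' : u' ≠ 0 := by
      rintro rfl
      have := hu' 0
      simp at this
    obtain ⟨c, hc⟩ := parallel_of hu0 hD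
    have hc0 : c ≠ 0 := by rintro rfl; simp at hc; exact hu0' hc
    have ev1 : ∀ᶠ δ : ℝ in 𝓝[>] (0 : ℝ), ∀ i, 0 < ((u + δ * Complex.I * u) * (z i - a)).re := by
      apply eventually_nhdsWithin_of_eventually_nhds
      rw [Filter.eventually_all]
      intro i
      have hcont : Continuous (fun δ : ℝ => ((u + δ * Complex.I * u) * (z i - a)).re) := by
        fun_prop
      have := hcont.continuousAt (x := 0)
      apply this.eventually_const_lt
      simpa using hu i
    obtain ⟨δ, h1, h2⟩ := (ev1.and eventually_mem_nhdsWithin).exists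
    have h2 : 0 < δ := h2
    refine out_pair h1 hu' ?_
    rw [hc]
    simp
    have hn : 0 < u.re * u.re + u.im * u.im := by
      have := Complex.normSq_pos.2 hu0
      rwa [Complex.normSq_apply] at this
    have : (u.re - δ * u.im) * (c * u.im) - (u.im + δ * u.re) * (c * u.re) =
      - (δ * c * (u.re * u.re + u.im * u.im)) := by ring
    intro h0
    have h5 : δ * c * (u.re * u.re + u.im * u.im) ≠ 0 :=
      mul_ne_zero (mul_ne_zero h2.ne' hc0) hn.ne'
    apply h5
    linarith
  · exact out_pair hu hu' hD

theorem wind_out {n : ℕ} [NeZero n] {z : ZMod n → ℂ} {a : ℂ} (ha : Outside z a) :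
    wind z a = 0 := by
  obtain ⟨u, hu⟩ := ha
  have hu0 : u ≠ 0 := by
    rintro rfl
    have := hu 0
    simp at this
  have := wind_zero (z := fun i => u * z i) (x := u * a) (by
    intro i; rw [← mul_sub]; exact hu i)
  rw [← this]
  unfold wind
  apply Finset.sum_congr rfl
  intro i _
  rw [← mul_sub, ← mul_sub, mul_div_mul_left _ _ hu0]

theorem wind_ext {n : ℕ} [NeZero n] {z : ZMod n → ℂ} {a : ℂ} {S : Set ℂ} (hS : IsPreconnected S)
    (hSP : S ⊆ (CB z)ᶜ) (haS : a ∈ S) (hb : ¬ Bornology.IsBounded S) : wind z a = 0 := by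
  obtain ⟨R, hR⟩ := (cb_compact z).isBounded.subset_ball 0
  obtain ⟨y, hyS, hy⟩ : ∃ y ∈ S, R < ‖y‖ := by
    by_contra hc
    push Not at hc
    apply hb
    apply (Metric.isBounded_closedBall (x := (0 : ℂ)) (r := R)).subset
    intro y hy
    simpa using hc y hy
  rw [wind_const z hS hSP haS hyS]
  apply wind_out
  refine ⟨-(starRingEnd ℂ y), fun i => ?_⟩
  have hz : ‖z i‖ < R := by simpa using hR (vert_mem z i)
  have e : (-(starRingEnd ℂ y) * (z i - y)).re = ‖y‖ ^ 2 - ((starRingEnd ℂ y) * z i).re := by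
    rw [← Complex.normSq_eq_norm_sq, Complex.normSq_apply]
    simp
    ring
  rw [e]
  have h1 : ((starRingEnd ℂ y) * z i).re ≤ ‖y‖ * ‖z i‖ := by
    refine (Complex.re_le_norm _).trans ?_
    rw [norm_mul, Complex.norm_conj]
  have hR0 := norm_nonneg (z i)
  have hy0 : 0 < ‖y‖ := by linarith
  nlinarith

theorem main {n : ℕ} [NeZero n] {z : ZMod n → ℂ} (h : CP z) {a b : ℂ} (ha : a ∉ CB z)
    (hb : b ∉ CB z) (hw : wind z a = wind z b) :
    ∃ k ≤ (n + 1) / 2, Reach z a k b := by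
  have hn := h.three_le
  obtain ⟨a2, a3⟩ := count0 h ha
  obtain ⟨b2, b3⟩ := count0 h hb
  rcases b3 with b3 | b3
  · exact ⟨_, le_rfl, count_case h a2 b3 hw⟩
  rcases a3 with a3 | a3
  · exact ⟨_, le_rfl, reach_symm (count_case h b2 a3 hw.symm)⟩
  · exact ⟨2, by omega, out_out a3 b3⟩

end PolyAux

namespace PolyAux
open Filter Topology

/-- the identification of the plane with the complex numbers -/
noncomputable def tr : Plane ≃ₗᵢ[ℝ] ℂ := Complex.orthonormalBasisOneI.repr.symm

theorem tr_seg (x y : Plane) : tr '' segment ℝ x y = segment ℝ (tr x) (tr y) :=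
  image_segment ℝ tr.toLinearEquiv.toLinearMap.toAffineMap x y

theorem tr_edge {n : ℕ} (p : ZMod n → Plane) (i : ZMod n) :
    CE (fun j => tr (p j)) i = tr '' polyEdge p i := by
  unfold CE polyEdge
  rw [tr_seg]

theorem tr_body {n : ℕ} (p : ZMod n → Plane) :
    CB (fun j => tr (p j)) = tr '' polyBody p := by
  unfold CB polyBody
  rw [image_iUnion]
  simp only [tr_edge]

theorem tr_mem {n : ℕ} (p : ZMod n → Plane) (x : Plane) :
    tr x ∈ CB (fun j => tr (p j)) ↔ x ∈ polyBody p := by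
  rw [tr_body, tr.injective.mem_set_image]

theorem tr_cp {n : ℕ} {p : ZMod n → Plane} (h : IsSimplePolygon p) : CP (fun j => tr (p j)) where
  three_le := h.three_le
  inj := tr.injective.comp h.inj
  consec := by
    intro i
    rw [tr_edge, tr_edge, ← image_inter tr.injective, h.consec, image_singleton]
  nonconsec := by
    intro i j h1 h2 h3
    rw [tr_edge, tr_edge, ← image_inter tr.injective, h.nonconsec i j h1 h2 h3, image_empty]

theorem ext_wind {n : ℕ} [NeZero n] {p : ZMod n → Plane} {a : Plane}
    (ha : a ∈ extP (polyBody p)) : wind (fun j => tr (p j)) (tr a) = 0 := by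
  obtain ⟨h1, h2⟩ := ha
  apply wind_ext (S := tr '' connectedComponentIn (polyBody p)ᶜ a)
  · exact isPreconnected_connectedComponentIn.image _ tr.continuous.continuousOn
  · rintro _ ⟨x, hx, rfl⟩
    rw [mem_compl_iff, tr_mem]
    exact connectedComponentIn_subset _ _ hx
  · exact mem_image_of_mem _ (mem_connectedComponentIn h1)
  · intro hb
    apply h2
    have := tr.symm.lipschitz.isBounded_image hb
    rw [image_image] at this
    simpa using this

theorem free_ext {n : ℕ} {p : ZMod n → Plane} {x y : Plane} (hx : x ∈ extP (polyBody p))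
    (h : Free (fun j => tr (p j)) (tr x) (tr y)) : segment ℝ x y ⊆ extP (polyBody p) := by
  have hs : segment ℝ x y ⊆ (polyBody p)ᶜ := by
    intro w hw
    rw [mem_compl_iff, ← tr_mem]
    apply h
    rw [← tr_seg]
    exact mem_image_of_mem _ hw
  intro w hw
  refine ⟨hs hw, ?_⟩
  have h1 := (convex_segment (𝕜 := ℝ) x y).isPreconnected.subset_connectedComponentIn
    (left_mem_segment ℝ x y) hs
  rw [← connectedComponentIn_eq (h1 hw)]
  exact hx.2

theorem reach_path {n : ℕ} {p : ZMod n → Plane} {a : Plane} (ha : a ∈ extP (polyBody p)) (k : ℕ) :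
    ∀ b, Reach (fun j => tr (p j)) (tr a) k (tr b) →
      b ∈ extP (polyBody p) ∧ PolyPath (extP (polyBody p)) a b k := by
  induction k with
  | zero =>
    intro b hb
    have : b = a := tr.injective hb
    subst this
    exact ⟨ha, fun _ => b, rfl, rfl, fun i => i.elim0⟩
  | succ k ih =>
    rintro b ⟨c, h1, h2⟩
    have hc : c = tr (tr.symm c) := by simp
    rw [hc] at h1 h2
    obtain ⟨h3, x, hx0, hxl, hxs⟩ := ih _ h1
    have hseg := free_ext h3 h2
    refine ⟨hseg (right_mem_segment _ _ _), Fin.snoc (α := fun _ => Plane) x b, ?_, ?_, ?_⟩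
    · rw [← hx0]
      exact Fin.snoc_castSucc (α := fun _ => Plane) (i := 0) ..
    · simp
    · intro i
      induction i using Fin.lastCases with
      | last =>
        rw [Fin.snoc_castSucc, Fin.succ_last, Fin.snoc_last, hxl]
        exact hseg
      | cast i =>
        rw [Fin.snoc_castSucc, Fin.succ_castSucc, Fin.snoc_castSucc]
        exact hxs i

end PolyAux

theorem stmt17 {n : ℕ} (p : ZMod n → Plane) (hP : IsSimplePolygon p) :
    ∀ a ∈ extP (polyBody p), ∀ b ∈ extP (polyBody p),
      ∃ k ≤ (n + 1) / 2, PolyPath (extP (polyBody p)) a b k := by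
  intro a ha b hb
  have : NeZero n := ⟨by have := hP.three_le; omega⟩
  obtain ⟨k, hk, hr⟩ := PolyAux.main (PolyAux.tr_cp hP) (a := PolyAux.tr a) (b := PolyAux.tr b)
    (by rw [PolyAux.tr_mem]; exact ha.1) (by rw [PolyAux.tr_mem]; exact hb.1)
    (by rw [PolyAux.ext_wind ha, PolyAux.ext_wind hb])
  exact ⟨k, hk, (PolyAux.reach_path ha k b hr).2⟩
end

section
/- Let P be a simple closed n-gon in ℝ² with n ≥ 6, and let a, b ∈ int P be points that do not see a common vertex of P via int P. Then there exist vertices a', b' of P such that a sees a' via int P, b sees b' via int P, and a' and b' are at most ⌊n/2⌋ − 2 edges apart along P. -/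
open Set Metric

lemma comb_nat (n m x1 x2 x3 y2 y3 : ℕ) (hm : m = n / 2) (hn : 6 ≤ n)
    (h12 : x1 < x2) (h23 : x2 < x3) (hy : y2 < y3) (hy0 : 0 < y2) (hyn : y3 < n)
    (a1 : m - 1 ≤ x1) (a3 : x3 + (m - 1) ≤ n)
    (H : ∀ x ∈ [x1, x3], ∀ y ∈ [y2, y3], (x ≤ y → m - 1 ≤ y - x ∧ (m - 1) + (y - x) ≤ n) ∧
      (y ≤ x → m - 1 ≤ x - y ∧ (m - 1) + (x - y) ≤ n)) : False := by
  have A := H x1 (by simp) y2 (by simp)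
  have B := H x1 (by simp) y3 (by simp)
  have C := H x3 (by simp) y2 (by simp)
  have D := H x3 (by simp) y3 (by simp)
  omega

lemma comb {n : ℕ} (hn : 6 ≤ n) (i1 i2 i3 j1 j2 j3 : ZMod n)
    (hi12 : i1 ≠ i2) (hi13 : i1 ≠ i3) (hi23 : i2 ≠ i3)
    (hj12 : j1 ≠ j2) (hj13 : j1 ≠ j3) (hj23 : j2 ≠ j3) :
    ∃ i ∈ ({i1, i2, i3} : Set (ZMod n)), ∃ j ∈ ({j1, j2, j3} : Set (ZMod n)),
      ∃ d : ℕ, d ≤ n / 2 - 2 ∧ (j = i + (d : ZMod n) ∨ i = j + (d : ZMod n)) := by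
  have : NeZero n := ⟨by omega⟩
  by_contra hcon
  push Not at hcon
  have key : ∀ i ∈ ({i1, i2, i3} : Set (ZMod n)), ∀ j ∈ ({j1, j2, j3} : Set (ZMod n)),
      ((i - j1).val ≤ (j - j1).val → n / 2 - 1 ≤ (j - j1).val - (i - j1).val ∧
        (n / 2 - 1) + ((j - j1).val - (i - j1).val) ≤ n) ∧
      ((j - j1).val ≤ (i - j1).val → n / 2 - 1 ≤ (i - j1).val - (j - j1).val ∧
        (n / 2 - 1) + ((i - j1).val - (j - j1).val) ≤ n) := by
    intro i hi j hj
    have hx := ZMod.val_lt (i - j1)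
    have hy := ZMod.val_lt (j - j1)
    have ex : (((i - j1).val : ℕ) : ZMod n) = i - j1 := ZMod.natCast_zmod_val _
    have ey : (((j - j1).val : ℕ) : ZMod n) = j - j1 := ZMod.natCast_zmod_val _
    generalize (i - j1).val = x at *
    generalize (j - j1).val = y at *
    have h := hcon i hi j hj
    constructor
    · intro hxy
      constructor
      · by_contra hc
        refine (h (y - x) (by omega)).1 ?_
        rw [Nat.cast_sub hxy, ex, ey]; ring
      · by_contra hc
        refine (h (n - (y - x)) (by omega)).2 ?_
        rw [Nat.cast_sub (by omega), Nat.cast_sub hxy, ex, ey, ZMod.natCast_self]; ring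
    · intro hxy
      constructor
      · by_contra hc
        refine (h (x - y) (by omega)).2 ?_
        rw [Nat.cast_sub hxy, ex, ey]; ring
      · by_contra hc
        refine (h (n - (x - y)) (by omega)).1 ?_
        rw [Nat.cast_sub (by omega), Nat.cast_sub hxy, ex, ey, ZMod.natCast_self]; ring
  have inj : ∀ i j : ZMod n, i ≠ j → (i - j1).val ≠ (j - j1).val := by
    intro i j hij h
    exact hij (sub_left_injective (ZMod.val_injective n h))
  have b0 : (j1 - j1).val = 0 := by simp
  have lt2 := ZMod.val_lt (j2 - j1)
  have lt3 := ZMod.val_lt (j3 - j1)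
  have q12 := inj _ _ hi12
  have q13 := inj _ _ hi13
  have q23 := inj _ _ hi23
  have r12 := inj _ _ hj12
  have r13 := inj _ _ hj13
  have r23 := inj _ _ hj23
  have k11 := key i1 (by simp) j1 (by simp)
  have k12 := key i1 (by simp) j2 (by simp)
  have k13 := key i1 (by simp) j3 (by simp)
  have k21 := key i2 (by simp) j1 (by simp)
  have k22 := key i2 (by simp) j2 (by simp)
  have k23 := key i2 (by simp) j3 (by simp)
  have k31 := key i3 (by simp) j1 (by simp)
  have k32 := key i3 (by simp) j2 (by simp)
  have k33 := key i3 (by simp) j3 (by simp)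
  rw [b0] at *
  clear key inj hcon
  generalize (i1 - j1).val = x1 at *
  generalize (i2 - j1).val = x2 at *
  generalize (i3 - j1).val = x3 at *
  generalize (j2 - j1).val = y2 at *
  generalize (j3 - j1).val = y3 at *
  have c1 : n / 2 - 1 ≤ x1 ∧ x1 + (n / 2 - 1) ≤ n := by
    have := k11.2 (Nat.zero_le _)
    rw [Nat.sub_zero] at this
    exact ⟨this.1, by rw [Nat.add_comm]; exact this.2⟩
  have c2 : n / 2 - 1 ≤ x2 ∧ x2 + (n / 2 - 1) ≤ n := by
    have := k21.2 (Nat.zero_le _)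
    rw [Nat.sub_zero] at this
    exact ⟨this.1, by rw [Nat.add_comm]; exact this.2⟩
  have c3 : n / 2 - 1 ≤ x3 ∧ x3 + (n / 2 - 1) ≤ n := by
    have := k31.2 (Nat.zero_le _)
    rw [Nat.sub_zero] at this
    exact ⟨this.1, by rw [Nat.add_comm]; exact this.2⟩
  clear k11 k21 k31
  have go : ∀ x1 x2 x3 : ℕ, x1 < x2 → x2 < x3 → n / 2 - 1 ≤ x1 → x3 + (n / 2 - 1) ≤ n →
      (∀ x ∈ [x1, x3], ∀ y ∈ [y2, y3], (x ≤ y → n / 2 - 1 ≤ y - x ∧ (n / 2 - 1) + (y - x) ≤ n) ∧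
      (y ≤ x → n / 2 - 1 ≤ x - y ∧ (n / 2 - 1) + (x - y) ≤ n)) → False := by
    intro x1 x2 x3 h1 h2 h3 h4 h5
    rcases lt_or_gt_of_ne r23 with h | h
    · exact comb_nat n (n / 2) x1 x2 x3 y2 y3 rfl hn h1 h2 h (Nat.pos_of_ne_zero (Ne.symm r12)) lt3 h3 h4 h5
    · refine comb_nat n (n / 2) x1 x2 x3 y3 y2 rfl hn h1 h2 h (Nat.pos_of_ne_zero (Ne.symm r13)) lt2 h3 h4 ?_
      intro x hx y hy
      exact h5 x hx y (by simp only [List.mem_cons, List.not_mem_nil, or_false] at hy ⊢; exact hy.symm)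
  have gen : ∀ u v : ℕ, (u = x1 ∨ u = x2 ∨ u = x3) → (v = x1 ∨ v = x2 ∨ v = x3) →
      (∀ x ∈ [u, v], ∀ y ∈ [y2, y3], (x ≤ y → n / 2 - 1 ≤ y - x ∧ (n / 2 - 1) + (y - x) ≤ n) ∧
      (y ≤ x → n / 2 - 1 ≤ x - y ∧ (n / 2 - 1) + (x - y) ≤ n)) := by
    intro u v hu hv x hx y hy
    simp only [List.mem_cons, List.not_mem_nil, or_false] at hx hy
    have hx' : x = x1 ∨ x = x2 ∨ x = x3 := by
      rcases hx with rfl | rfl <;> assumption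
    rcases hx' with rfl | rfl | rfl <;> rcases hy with rfl | rfl <;> assumption
  clear k12 k13 k22 k23 k32 k33
  rcases lt_or_gt_of_ne q12 with h | h <;> rcases lt_or_gt_of_ne q13 with h' | h' <;>
    rcases lt_or_gt_of_ne q23 with h'' | h''
  · exact go x1 x2 x3 h h'' c1.1 c3.2 (gen _ _ (by simp) (by simp))
  · exact go x1 x3 x2 h' h'' c1.1 c2.2 (gen _ _ (by simp) (by simp))
  · exact absurd (h.trans h'') (lt_asymm h')
  · exact go x3 x1 x2 h' h c3.1 c2.2 (gen _ _ (by simp) (by simp))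
  · exact go x2 x1 x3 h h' c2.1 c3.2 (gen _ _ (by simp) (by simp))
  · exact absurd (h'.trans h'') (lt_asymm h)
  · exact go x2 x3 x1 h'' h' c2.1 c1.2 (gen _ _ (by simp) (by simp))
  · exact go x3 x2 x1 h'' h c3.1 c1.2 (gen _ _ (by simp) (by simp))

/-- Direction with slope `s` in the half-plane with inner normal `(u0, u1)`. -/
noncomputable def dirv (u0 u1 s : ℝ) : Plane := !₂[u0 - s * u1, u1 + s * u0]

lemma dirv_zero (u0 u1 s : ℝ) : dirv u0 u1 s 0 = u0 - s * u1 := by simp [dirv]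
lemma dirv_one (u0 u1 s : ℝ) : dirv u0 u1 s 1 = u1 + s * u0 := by simp [dirv]

lemma plane_ext {x y : Plane} (h0 : x 0 = y 0) (h1 : x 1 = y 1) : x = y := by
  ext i; fin_cases i <;> assumption

lemma dirv_cont (u0 u1 : ℝ) : Continuous (dirv u0 u1) := by
  unfold dirv
  refine (PiLp.continuous_toLp 2 _).comp ?_
  refine continuous_pi fun i => ?_
  fin_cases i <;> simp <;> fun_prop

lemma polyBody_closed {n : ℕ} [NeZero n] (p : ZMod n → Plane) : IsClosed (polyBody p) := by
  unfold polyBody polyEdge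
  refine isClosed_iUnion_of_finite fun i => ?_
  rw [← convexHull_pair]
  exact ((Set.toFinite _).isCompact_convexHull ℝ).isClosed

/-- If `a ∈ intP P` and a half-open segment avoids `P`, it lies in `intP P`. -/
lemma sees_of_avoid {P : Set Plane} {a v : Plane} (ha : a ∈ intP P)
    (h : ∀ x ∈ openSegment ℝ a v, x ∉ P) : openSegment ℝ a v ⊆ intP P := by
  intro x hx
  refine ⟨h x hx, ?_⟩
  have hsub : segment ℝ a x ⊆ Pᶜ := by
    intro y hy
    rw [openSegment_eq_image'] at hx
    obtain ⟨t, ⟨ht0, ht1⟩, rfl⟩ := hx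
    rw [segment_eq_image'] at hy
    obtain ⟨r, ⟨hr0, hr1⟩, rfl⟩ := hy
    rcases hr0.eq_or_lt with rfl | hr0
    · simpa using ha.1
    · refine h _ ?_
      rw [openSegment_eq_image']
      refine ⟨r * t, ⟨mul_pos hr0 ht0, by nlinarith⟩, ?_⟩
      simp only [add_sub_cancel_left, smul_smul]
  have hc : IsPreconnected (segment ℝ a x) := (convex_segment a x).isPreconnected
  have := hc.subset_connectedComponentIn (left_mem_segment ℝ a x) hsub
  have hx' := this (right_mem_segment ℝ a x)
  rw [← connectedComponentIn_eq hx']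
  exact ha.2

/-- first hit -/
lemma first_hit {P : Set Plane} (hP : IsClosed P) {a d : Plane} (ha : a ∈ intP P) (hd : d ≠ 0) :
    ∃ t : ℝ, 0 < t ∧ a + t • d ∈ P ∧ ∀ r, 0 ≤ r → r < t → a + r • d ∉ P := by
  set S : Set ℝ := {t | 0 ≤ t ∧ a + t • d ∈ P} with hS
  have hcl : IsClosed S := by
    have : S = Ici 0 ∩ (fun t : ℝ => a + t • d) ⁻¹' P := rfl
    rw [this]
    exact isClosed_Ici.inter (hP.preimage (by fun_prop))
  have hbd : BddBelow S := ⟨0, fun t ht => ht.1⟩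
  have hne : S.Nonempty := by
    by_contra hemp
    rw [Set.not_nonempty_iff_eq_empty] at hemp
    have hsub : (fun t : ℝ => a + t • d) '' Ici 0 ⊆ Pᶜ := by
      rintro _ ⟨t, ht, rfl⟩ hmem
      have : t ∈ S := ⟨ht, hmem⟩
      rw [hemp] at this
      exact this
    have hc : IsPreconnected ((fun t : ℝ => a + t • d) '' Ici 0) :=
      (convex_Ici (0:ℝ)).isPreconnected.image _ (by fun_prop)
    have h1 := hc.subset_connectedComponentIn (x := a) ⟨0, by simp, by simp⟩ hsub
    have h2 := ha.2.subset h1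
    obtain ⟨C, hC⟩ := h2.exists_norm_le
    have hdp : 0 < ‖d‖ := norm_pos_iff.mpr hd
    have hC0 : 0 ≤ C := (norm_nonneg _).trans (hC a ⟨0, by simp, by simp⟩)
    have h3 := hC _ ⟨(C + ‖a‖ + 1) / ‖d‖, by simp only [mem_Ici]; positivity, rfl⟩
    have h4 : ‖((C + ‖a‖ + 1) / ‖d‖) • d‖ = C + ‖a‖ + 1 := by
      rw [norm_smul, Real.norm_of_nonneg (by positivity)]
      field_simp
    have h5 := norm_sub_le (a + ((C + ‖a‖ + 1) / ‖d‖) • d) a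
    simp only [add_sub_cancel_left] at h5
    rw [h4] at h5
    simp only at h3
    linarith
  have hmem := hcl.csInf_mem hne hbd
  refine ⟨sInf S, ?_, hmem.2, ?_⟩
  · rcases hmem.1.eq_or_lt with h | h
    · exfalso
      have := hmem.2
      rw [← h] at this
      exact ha.1 (by simpa using this)
    · exact h
  · intro r hr hlt hm
    exact absurd (csInf_le hbd (show r ∈ S from ⟨hr, hm⟩)) (not_le.mpr hlt)

/-- `x` is on two different edges only if it is a vertex. -/
lemma vertex_of_two {n : ℕ} {p : ZMod n → Plane} (hP : IsSimplePolygon p) {i j : ZMod n}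
    (hij : i ≠ j) {x : Plane} (hi : x ∈ polyEdge p i) (hj : x ∈ polyEdge p j) :
    ∃ k, x = p k := by
  by_cases h1 : j = i + 1
  · subst h1
    have : x ∈ polyEdge p i ∩ polyEdge p (i + 1) := ⟨hi, hj⟩
    rw [hP.consec] at this
    exact ⟨_, this⟩
  by_cases h2 : i = j + 1
  · subst h2
    have : x ∈ polyEdge p j ∩ polyEdge p (j + 1) := ⟨hj, hi⟩
    rw [hP.consec] at this
    exact ⟨_, this⟩
  have : x ∈ polyEdge p i ∩ polyEdge p j := ⟨hi, hj⟩
  rw [hP.nonconsec i j hij.symm h1 h2] at this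
  exact this.elim

/-- Local persistence of a transversal crossing. -/
lemma persist (a q q' : Plane) (u0 u1 s0 t0 l0 : ℝ) (ht0 : 0 < t0) (hl : 0 < l0) (hl1 : l0 < 1)
    (heq : a + t0 • dirv u0 u1 s0 = q + l0 • (q' - q)) (hqq : q ≠ q')
    (hfirst : ∀ r, 0 ≤ r → r < t0 → a + r • dirv u0 u1 s0 ∉ segment ℝ q q')
    (e : ℝ) (he : 0 < e) :
    ∀ᶠ s in nhds s0, ∃ t, 0 < t ∧ t < t0 + e ∧ a + t • dirv u0 u1 s ∈ segment ℝ q q' := by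
  have e0 : a 0 + t0 * dirv u0 u1 s0 0 = q 0 + l0 * (q' 0 - q 0) := by
    simpa using congrArg (fun x : Plane => x 0) heq
  have e1 : a 1 + t0 * dirv u0 u1 s0 1 = q 1 + l0 * (q' 1 - q 1) := by
    simpa using congrArg (fun x : Plane => x 1) heq
  set D : ℝ → ℝ := fun s => dirv u0 u1 s 0 * (q' 1 - q 1) - dirv u0 u1 s 1 * (q' 0 - q 0) with hD
  have hDc : Continuous D := by
    simp only [hD, dirv_zero, dirv_one]; fun_prop
  have hD0 : D s0 ≠ 0 := by
    intro h0
    simp only [hD] at h0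
    -- the edge is parallel to the direction
    have hk : ∃ k : ℝ, q' - q = k • dirv u0 u1 s0 := by
      have hdne : dirv u0 u1 s0 0 ≠ 0 ∨ dirv u0 u1 s0 1 ≠ 0 := by
        by_contra hc
        push Not at hc
        have hz : dirv u0 u1 s0 = 0 := plane_ext (by simpa using hc.1) (by simpa using hc.2)
        refine hfirst 0 le_rfl ht0 ?_
        have : a + (0:ℝ) • dirv u0 u1 s0 = q + l0 • (q' - q) := by
          rw [← heq, hz]; simp
        rw [this, segment_eq_image']
        exact ⟨l0, ⟨hl.le, hl1.le⟩, rfl⟩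
      rcases hdne with h | h
      · refine ⟨(q' 0 - q 0) / dirv u0 u1 s0 0, plane_ext ?_ ?_⟩
        · simp; field_simp
        · simp; field_simp; linarith
      · refine ⟨(q' 1 - q 1) / dirv u0 u1 s0 1, plane_ext ?_ ?_⟩
        · simp; field_simp; linarith
        · simp; field_simp
    obtain ⟨k, hk⟩ := hk
    have hk0 : k ≠ 0 := by
      rintro rfl
      rw [zero_smul, sub_eq_zero] at hk
      exact hqq hk.symm
    have hgo : ∀ m : ℝ, 0 ≤ l0 - m → l0 - m ≤ 1 → 0 < m * k → m * k ≤ t0 → False := by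
      intro m h1 h2 h3 h4
      refine hfirst (t0 - m * k) (by linarith) (by linarith) ?_
      rw [segment_eq_image']
      refine ⟨l0 - m, ⟨h1, h2⟩, ?_⟩
      simp only
      rw [sub_smul, ← add_sub_assoc, ← heq, hk, sub_smul, smul_smul, add_sub_assoc]
    rcases lt_or_gt_of_ne hk0 with h | h
    · have hmin : 0 < min (1 - l0) (t0 / (-k)) := lt_min (by linarith) (div_pos ht0 (by linarith))
      refine hgo (-min (1 - l0) (t0 / (-k))) (by linarith)
        (by linarith [min_le_left (1 - l0) (t0 / (-k))]) (by nlinarith) ?_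
      have := min_le_right (1 - l0) (t0 / (-k))
      rw [le_div_iff₀ (by linarith)] at this
      linarith
    · have hmin : 0 < min l0 (t0 / k) := lt_min hl (div_pos ht0 h)
      refine hgo (min l0 (t0 / k)) (by linarith [min_le_left l0 (t0 / k)]) (by linarith)
        (by positivity) ?_
      have := min_le_right l0 (t0 / k)
      rwa [le_div_iff₀ h] at this
  set T : ℝ → ℝ := fun s => ((q 0 - a 0) * (q' 1 - q 1) - (q 1 - a 1) * (q' 0 - q 0)) / D s with hT
  set L : ℝ → ℝ := fun s =>
    ((q 0 - a 0) * dirv u0 u1 s 1 - (q 1 - a 1) * dirv u0 u1 s 0) / D s with hL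
  have hTc : ContinuousAt T s0 := continuousAt_const.div hDc.continuousAt hD0
  have hLc : ContinuousAt L s0 := by
    refine ContinuousAt.div ?_ hDc.continuousAt hD0
    simp only [dirv_zero, dirv_one]; fun_prop
  have hT0 : T s0 = t0 := by
    simp only [hT]
    rw [div_eq_iff hD0]
    simp only [hD]
    linear_combination (-(q' 1 - q 1)) * e0 + (q' 0 - q 0) * e1
  have hL0 : L s0 = l0 := by
    simp only [hL]
    rw [div_eq_iff hD0]
    simp only [hD]
    linear_combination (-dirv u0 u1 s0 1) * e0 + (dirv u0 u1 s0 0) * e1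
  have f1 : ∀ᶠ s in nhds s0, 0 < T s := hTc.eventually (lt_mem_nhds (by rw [hT0]; exact ht0))
  have f2 : ∀ᶠ s in nhds s0, T s < t0 + e :=
    hTc.eventually (gt_mem_nhds (by rw [hT0]; linarith))
  have f3 : ∀ᶠ s in nhds s0, 0 < L s := hLc.eventually (lt_mem_nhds (by rw [hL0]; exact hl))
  have f4 : ∀ᶠ s in nhds s0, L s < 1 := hLc.eventually (gt_mem_nhds (by rw [hL0]; exact hl1))
  have f5 : ∀ᶠ s in nhds s0, D s ≠ 0 := hDc.continuousAt.eventually_ne hD0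
  filter_upwards [f1, f2, f3, f4, f5] with s g1 g2 g3 g4 g5
  refine ⟨T s, g1, g2, ?_⟩
  rw [segment_eq_image']
  refine ⟨L s, ⟨g3.le, g4.le⟩, ?_⟩
  simp only
  refine plane_ext ?_ ?_
  · simp only [PiLp.add_apply, PiLp.smul_apply, PiLp.sub_apply, smul_eq_mul, hT, hL]
    field_simp
    simp only [hD]; ring
  · simp only [PiLp.add_apply, PiLp.smul_apply, PiLp.sub_apply, smul_eq_mul, hT, hL]
    field_simp
    simp only [hD]; ring

/-- A closed set avoided by `{a + r d(s0) : 0 ≤ r ≤ t0}` is avoided for nearby directions. -/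
lemma avoid_near {E : Set Plane} (hE : IsClosed E) (a : Plane) (u0 u1 s0 t0 : ℝ)
    (h : ∀ r, 0 ≤ r → r ≤ t0 → a + r • dirv u0 u1 s0 ∉ E) (ht0 : 0 ≤ t0) :
    ∃ e > 0, ∀ᶠ s in nhds s0, ∀ r, 0 ≤ r → r < t0 + e → a + r • dirv u0 u1 s ∉ E := by
  have hF : Continuous (fun x : ℝ × ℝ => a + x.1 • dirv u0 u1 x.2) :=
    continuous_const.add (continuous_fst.smul ((dirv_cont u0 u1).comp continuous_snd))
  have hopen : IsOpen ((fun x : ℝ × ℝ => a + x.1 • dirv u0 u1 x.2) ⁻¹' Eᶜ) :=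
    hE.isOpen_compl.preimage hF
  obtain ⟨U, V, hU, hV, hIU, hsV, hUV⟩ := generalized_tube_lemma (isCompact_Icc (a := (0:ℝ)) (b := t0))
    (isCompact_singleton (x := s0)) hopen (by
      rintro ⟨r, s⟩ ⟨hr, hs⟩
      simp only [mem_singleton_iff] at hs
      subst hs
      exact h r hr.1 hr.2)
  obtain ⟨e, he, hball⟩ := Metric.isOpen_iff.mp hU t0 (hIU ⟨ht0, le_rfl⟩)
  refine ⟨e, he, ?_⟩
  filter_upwards [hV.mem_nhds (hsV rfl)] with s hs r hr0 hr1
  have hrU : r ∈ U := by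
    rcases le_or_gt r t0 with h' | h'
    · exact hIU ⟨hr0, h'⟩
    · apply hball
      rw [Metric.mem_ball, Real.dist_eq, abs_of_pos (by linarith)]
      linarith
  exact hUV (show (r, s) ∈ U ×ˢ V from ⟨hrU, hs⟩)

/-- One segment cannot be hit by all rays of an open half-plane. -/
lemma no_full (a q q' : Plane) (hqq : q ≠ q') (u0 u1 : ℝ) (hu : 0 < u0 ^ 2 + u1 ^ 2)
    (h : ∀ s : ℝ, ∃ t : ℝ, 0 < t ∧ a + t • dirv u0 u1 s ∈ segment ℝ q q') : False := by
  have h' : ∀ s : ℝ, ∃ t l : ℝ, 0 < t ∧ 0 ≤ l ∧ l ≤ 1 ∧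
      a 0 + t * (u0 - s * u1) = q 0 + l * (q' 0 - q 0) ∧
      a 1 + t * (u1 + s * u0) = q 1 + l * (q' 1 - q 1) := by
    intro s
    obtain ⟨t, ht, hm⟩ := h s
    rw [segment_eq_image'] at hm
    obtain ⟨l, ⟨hl0, hl1⟩, heq⟩ := hm
    have e0 := congrArg (fun x : Plane => x 0) heq
    have e1 := congrArg (fun x : Plane => x 1) heq
    simp [dirv_zero, dirv_one] at e0 e1
    exact ⟨t, l, ht, hl0, hl1, by linarith, by linarith⟩
  set w0 := q' 0 - q 0 with hw0
  set w1 := q' 1 - q 1 with hw1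
  set c := (q 0 - a 0) * w1 - (q 1 - a 1) * w0 with hc
  set A := u0 * w1 - u1 * w0 with hA
  set B := - u1 * w1 - u0 * w0 with hB
  have hcross : ∀ s, ∃ t, 0 < t ∧ t * (A + s * B) = c := by
    intro s
    obtain ⟨t, l, ht, _, _, e0, e1⟩ := h' s
    refine ⟨t, ht, ?_⟩
    simp only [hA, hB, hc]
    linear_combination w1 * e0 - w0 * e1
  have hB0 : B = 0 := by
    by_contra hB0
    obtain ⟨t, ht, e⟩ := hcross (-A / B)
    have : A + -A / B * B = 0 := by field_simp; ring
    rw [this, mul_zero] at e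
    obtain ⟨t, ht, e'⟩ := hcross ((1 - A) / B)
    have : A + (1 - A) / B * B = 1 := by field_simp; ring
    rw [this, ← e] at e'
    linarith
  have hA0 : A ≠ 0 := by
    intro hA0
    have hw : (u0 ^ 2 + u1 ^ 2) * w0 = 0 := by
      simp only [hA] at hA0; simp only [hB] at hB0
      linear_combination (-u1) * hA0 - u0 * hB0
    have hw' : (u0 ^ 2 + u1 ^ 2) * w1 = 0 := by
      simp only [hA] at hA0; simp only [hB] at hB0
      linear_combination u0 * hA0 - u1 * hB0
    have z0 : w0 = 0 := by
      rcases mul_eq_zero.mp hw with h | h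
      · exact absurd h hu.ne'
      · exact h
    have z1 : w1 = 0 := by
      rcases mul_eq_zero.mp hw' with h | h
      · exact absurd h hu.ne'
      · exact h
    exact hqq (plane_ext (by linarith) (by linarith))
  have ht : ∀ s t, t * (A + s * B) = c → t = c / A := by
    intro s t e
    rw [hB0, mul_zero, add_zero] at e
    rw [← e]; field_simp
  set t := c / A with htd
  have htpos : 0 < t := by
    obtain ⟨t', ht', e⟩ := hcross 0
    rw [← ht 0 t' e]; exact ht'
  set G := -u1 * (q 0 - a 0) + u0 * (q 1 - a 1) with hG
  set K := -u1 * w0 + u0 * w1 with hK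
  obtain ⟨t', l, ht', hl0, hl1, e0, e1⟩ := h' ((|G| + |K| + 1) / (t * (u0 ^ 2 + u1 ^ 2)))
  set s := (|G| + |K| + 1) / (t * (u0 ^ 2 + u1 ^ 2)) with hs
  have htt : t' = t := by
    refine ht s t' ?_
    simp only [hA, hB, hc]
    linear_combination w1 * e0 - w0 * e1
  rw [htt] at e0 e1
  have e2 : s * (t * (u0 ^ 2 + u1 ^ 2)) = G + l * K := by
    simp only [hG, hK]
    linear_combination (-u1) * e0 + u0 * e1
  have e3 : s * (t * (u0 ^ 2 + u1 ^ 2)) = |G| + |K| + 1 := by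
    rw [hs]; field_simp
  have e4 : l * K ≤ |K| := by
    have := le_abs_self K
    nlinarith [abs_nonneg K]
  have := le_abs_self G
  linarith

lemma key_visible {n : ℕ} (p : ZMod n → Plane) (hP : IsSimplePolygon p) (a : Plane)
    (ha : a ∈ intP (polyBody p)) (u0 u1 : ℝ) (hu : 0 < u0 ^ 2 + u1 ^ 2) :
    ∃ k, openSegment ℝ a (p k) ⊆ intP (polyBody p) ∧
      0 < u0 * (p k 0 - a 0) + u1 * (p k 1 - a 1) := by
  have h3 := hP.three_le
  have : NeZero n := ⟨by omega⟩
  have : Fact (1 < n) := ⟨by omega⟩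
  by_contra hcon
  push Not at hcon
  have hdne : ∀ s, dirv u0 u1 s ≠ 0 := by
    intro s h
    have e0 := congrArg (fun x : Plane => x 0) h
    have e1 := congrArg (fun x : Plane => x 1) h
    simp [dirv_zero, dirv_one] at e0 e1
    have : (1 + s ^ 2) * (u0 ^ 2 + u1 ^ 2) = 0 := by
      linear_combination (u0 - s * u1) * e0 + (u1 + s * u0) * e1
    have h2 : 0 < (1 + s ^ 2) * (u0 ^ 2 + u1 ^ 2) := by positivity
    linarith
  have hcl : ∀ i, IsClosed (polyEdge p i) := by
    intro i
    unfold polyEdge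
    rw [← convexHull_pair]
    exact ((Set.toFinite _).isCompact_convexHull ℝ).isClosed
  have hnev : ∀ i : ZMod n, p i ≠ p (i + 1) := by
    intro i h
    have := hP.inj h
    simp at this
  have hnov : ∀ s t : ℝ, 0 < t → (∀ r : ℝ, 0 ≤ r → r < t → a + r • dirv u0 u1 s ∉ polyBody p) →
      ∀ k, a + t • dirv u0 u1 s ≠ p k := by
    intro s t ht hf k hk
    have h1 : openSegment ℝ a (p k) ⊆ intP (polyBody p) := by
      refine sees_of_avoid ha ?_
      intro x hx
      rw [openSegment_eq_image', ← hk] at hx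
      obtain ⟨r, ⟨hr0, hr1⟩, rfl⟩ := hx
      simp only [add_sub_cancel_left, smul_smul]
      exact hf _ (by positivity) (by nlinarith)
    have h2 := hcon k h1
    rw [← hk] at h2
    simp [dirv_zero, dirv_one] at h2
    have : 0 < t * (u0 ^ 2 + u1 ^ 2) := by positivity
    nlinarith
  set S : ZMod n → Set ℝ := fun i => {s | ∃ t : ℝ, 0 < t ∧ a + t • dirv u0 u1 s ∈ polyEdge p i ∧
    ∀ r : ℝ, 0 ≤ r → r < t → a + r • dirv u0 u1 s ∉ polyBody p} with hS
  have hcover : ∀ s, ∃ i, s ∈ S i := by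
    intro s
    obtain ⟨t, ht, hm, hf⟩ := first_hit (polyBody_closed p) ha (hdne s)
    obtain ⟨i, hi⟩ := mem_iUnion.mp hm
    exact ⟨i, t, ht, hi, hf⟩
  have hsubP : ∀ i, polyEdge p i ⊆ polyBody p := fun i => subset_iUnion (polyEdge p) i
  have hdisj : ∀ i j s, s ∈ S i → s ∈ S j → i = j := by
    rintro i j s ⟨t, ht, hm, hf⟩ ⟨t', ht', hm', hf'⟩
    have : t = t' := by
      rcases lt_trichotomy t t' with h | h | h
      · exact absurd (hsubP _ hm) (hf' t ht.le h)
      · exact h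
      · exact absurd (hsubP _ hm') (hf t' ht'.le h)
    subst this
    by_contra hij
    obtain ⟨k, hk⟩ := vertex_of_two hP hij hm hm'
    exact hnov s t ht hf k hk
  have hopen : ∀ i, IsOpen (S i) := by
    intro i
    rw [isOpen_iff_mem_nhds]
    rintro s0 ⟨t0, ht0, hm, hf⟩
    have hE : IsClosed (⋃ j ∈ ({i}ᶜ : Set (ZMod n)), polyEdge p j) :=
      (Set.toFinite _).isClosed_biUnion fun j _ => hcl j
    obtain ⟨e, he, hav⟩ := avoid_near hE a u0 u1 s0 t0 (by
      intro r hr0 hr1 hmem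
      simp only [mem_iUnion] at hmem
      obtain ⟨j, hj, hmj⟩ := hmem
      rcases hr1.eq_or_lt with rfl | hlt
      · obtain ⟨k, hk⟩ := vertex_of_two hP (Ne.symm hj) hm hmj
        exact hnov s0 r ht0 hf k hk
      · exact hf r hr0 hlt (hsubP _ hmj)) ht0.le
    have hm2 := hm
    unfold polyEdge at hm2
    rw [segment_eq_image'] at hm2
    obtain ⟨l, ⟨hl0, hl1⟩, heq⟩ := hm2
    simp only at heq
    have hl0' : 0 < l := by
      rcases hl0.eq_or_lt with rfl | h
      · exact absurd (by simpa using heq.symm) (hnov s0 t0 ht0 hf i)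
      · exact h
    have hl1' : l < 1 := by
      rcases hl1.eq_or_lt with rfl | h
      · exact absurd (by simpa using heq.symm) (hnov s0 t0 ht0 hf (i + 1))
      · exact h
    have hper := persist a (p i) (p (i + 1)) u0 u1 s0 t0 l ht0 hl0' hl1' heq.symm (hnev i)
      (fun r hr0 hr1 hmem => hf r hr0 hr1 (hsubP i hmem)) e he
    filter_upwards [hper, hav] with s ⟨t, ht, hte, htm⟩ hs
    obtain ⟨t', ht', hm', hf'⟩ := first_hit (polyBody_closed p) ha (hdne s)
    have hle : t' ≤ t := by
      by_contra hlt
      exact hf' t ht.le (not_le.mp hlt) (hsubP i htm)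
    refine ⟨t', ht', ?_, hf'⟩
    obtain ⟨j, hj⟩ := mem_iUnion.mp hm'
    by_cases hji : j = i
    · rwa [hji] at hj
    · exact absurd (mem_biUnion (show j ∈ ({i}ᶜ : Set (ZMod n)) from hji) hj)
        (hs t' ht'.le (by linarith))
  obtain ⟨i, hi⟩ := hcover 0
  have hcompl : (S i)ᶜ = ⋃ j ∈ ({i}ᶜ : Set (ZMod n)), S j := by
    ext s
    simp only [mem_compl_iff, mem_iUnion]
    constructor
    · intro hs
      obtain ⟨j, hj⟩ := hcover s
      exact ⟨j, fun h => hs (by rw [mem_singleton_iff] at h; rwa [h] at hj), hj⟩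
    · rintro ⟨j, hj, hsj⟩ hsi
      exact hj (hdisj j i s hsj hsi)
  have hclopen : IsClopen (S i) := by
    refine ⟨?_, hopen i⟩
    rw [← isOpen_compl_iff, hcompl]
    exact isOpen_biUnion fun j _ => hopen j
  have huniv : S i = univ := hclopen.eq_univ ⟨0, hi⟩
  refine no_full a (p i) (p (i + 1)) (hnev i) u0 u1 hu fun s => ?_
  have : s ∈ S i := by rw [huniv]; trivial
  obtain ⟨t, ht, hm, _⟩ := this
  exact ⟨t, ht, hm⟩

lemma three_visible {n : ℕ} (p : ZMod n → Plane) (hP : IsSimplePolygon p) (a : Plane)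
    (ha : a ∈ intP (polyBody p)) :
    ∃ k1 k2 k3, k1 ≠ k2 ∧ k1 ≠ k3 ∧ k2 ≠ k3 ∧
      ∀ k ∈ ({k1, k2, k3} : Set (ZMod n)), openSegment ℝ a (p k) ⊆ intP (polyBody p) := by
  obtain ⟨k1, v1, g1⟩ := key_visible p hP a ha 1 0 (by norm_num)
  set x0 := p k1 0 - a 0 with hx0
  set x1 := p k1 1 - a 1 with hx1
  have hx : 0 < x0 ^ 2 + x1 ^ 2 := by
    have : 0 < x0 := by linarith
    positivity
  obtain ⟨k2, v2, g2⟩ := key_visible p hP a ha (-x0) (-x1) (by nlinarith)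
  have h12 : k1 ≠ k2 := by
    rintro rfl
    rw [← hx0, ← hx1] at g2
    nlinarith
  have hk3 : ∃ k3, openSegment ℝ a (p k3) ⊆ intP (polyBody p) ∧ k1 ≠ k3 ∧ k2 ≠ k3 := by
    rcases le_total (-x1 * (p k2 0 - a 0) + x0 * (p k2 1 - a 1)) 0 with h | h
    · obtain ⟨k3, v3, g3⟩ := key_visible p hP a ha (-x1) x0 (by nlinarith)
      refine ⟨k3, v3, ?_, ?_⟩
      · rintro rfl
        rw [← hx0, ← hx1] at g3
        nlinarith
      · rintro rfl
        linarith
    · obtain ⟨k3, v3, g3⟩ := key_visible p hP a ha x1 (-x0) (by nlinarith)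
      refine ⟨k3, v3, ?_, ?_⟩
      · rintro rfl
        rw [← hx0, ← hx1] at g3
        nlinarith
      · rintro rfl
        linarith
  obtain ⟨k3, v3, h13, h23⟩ := hk3
  refine ⟨k1, k2, k3, h12, h13, h23, ?_⟩
  rintro k (rfl | rfl | rfl) <;> assumption

theorem stmt18 {n : ℕ} (p : ZMod n → Plane) (hP : IsSimplePolygon p) (hn : 6 ≤ n)
    (a b : Plane)
    (ha : a ∈ intP (polyBody p)) (hb : b ∈ intP (polyBody p))
    (hnocommon : ¬ ∃ i : ZMod n, openSegment ℝ a (p i) ⊆ intP (polyBody p) ∧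
      openSegment ℝ b (p i) ⊆ intP (polyBody p)) :
    ∃ i j : ZMod n, ∃ d : ℕ, d ≤ n / 2 - 2 ∧
      (j = i + (d : ZMod n) ∨ i = j + (d : ZMod n)) ∧
      openSegment ℝ a (p i) ⊆ intP (polyBody p) ∧
      openSegment ℝ b (p j) ⊆ intP (polyBody p) := by
  obtain ⟨i1, i2, i3, h12, h13, h23, hA⟩ := three_visible p hP a ha
  obtain ⟨j1, j2, j3, g12, g13, g23, hB⟩ := three_visible p hP b hb
  obtain ⟨i, hi, j, hj, d, hd, hij⟩ := comb hn i1 i2 i3 j1 j2 j3 h12 h13 h23 g12 g13 g23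
  exact ⟨i, j, d, hd, hij, hA i hi, hB j hj⟩
end
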